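/- arXiv:1803.05047 — 3 statements merged into one kernel-verified Lean document; each statement's English description precedes it below -/
import Mathlib

section
/- For every element U of the Clifford+T group, the minimum number of occurrences of the letter T over all words in the alphabet {H, S, T} whose product equals U is exactly half the least denominator exponent of Û₊₊ (in particular, this least denominator exponent is even). -/
open Matrix Complex

noncomputable section

/-- ω = exp(2πi/3), a primitive third root of unity. -/
def ω : ℂ := exp (2 * Real.pi * I / 3)

/-- ζ = exp(2πi/9), a primitive ninth root of unity. -/
def ζ : ℂ := exp (2 * Real.pi * I / 9)

/-- The qutrit Pauli X matrix. -/
def Xmat : Matrix (Fin 3) (Fin 3) ℂ := !![0,0,1; 1,0,0; 0,1,0]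

/-- The qutrit Pauli Z matrix. -/
def Zmat : Matrix (Fin 3) (Fin 3) ℂ := !![1,0,0; 0,ω,0; 0,0,ω^2]

/-- The qutrit Hadamard matrix H = (1/(i√3))·[[1,1,1],[1,ω,ω²],[1,ω²,ω]]. -/
def Hmat : Matrix (Fin 3) (Fin 3) ℂ :=
  (I * (Real.sqrt 3 : ℂ))⁻¹ • !![1,1,1; 1,ω,ω^2; 1,ω^2,ω]

/-- The qutrit phase matrix S = ζ⁸·diag(1,1,ω). -/
def Smat : Matrix (Fin 3) (Fin 3) ℂ := ζ^8 • !![1,0,0; 0,1,0; 0,0,ω]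

/-- The qutrit T matrix T = diag(1,ζ,ζ⁸). -/
def Tmat : Matrix (Fin 3) (Fin 3) ℂ := !![1,0,0; 0,ζ,0; 0,0,ζ^8]

lemma omega_ne_zero : ω ≠ 0 := Complex.exp_ne_zero _
lemma zeta_ne_zero : ζ ≠ 0 := Complex.exp_ne_zero _

lemma omega_im_pos : 0 < ω.im := by
  have h : ω = Complex.exp ((2 * Real.pi / 3 : ℝ) * I) := by
    rw [ω]; push_cast; ring_nf
  rw [h, Complex.exp_ofReal_mul_I_im]
  apply Real.sin_pos_of_pos_of_lt_pi
  · positivity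
  · nlinarith [Real.pi_pos]

lemma omega_ne_one : ω ≠ 1 := by
  intro h
  have := omega_im_pos
  rw [h] at this
  simp at this

lemma omega_cube : ω ^ 3 = 1 := by
  rw [ω, ← Complex.exp_nat_mul]
  rw [show (3:ℕ) * (2 * Real.pi * I / 3) = 2 * Real.pi * I by push_cast; ring]
  exact Complex.exp_two_pi_mul_I

lemma detX : Xmat.det ≠ 0 := by
  simp [Xmat, Matrix.det_fin_three]

lemma detZ : Zmat.det ≠ 0 := by
  simp [Zmat, Matrix.det_fin_three, omega_ne_zero]

lemma detS : Smat.det ≠ 0 := by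
  simp [Smat, Matrix.det_fin_three, omega_ne_zero, zeta_ne_zero]

lemma detT : Tmat.det ≠ 0 := by
  simp [Tmat, Matrix.det_fin_three, zeta_ne_zero]

lemma detH : Hmat.det ≠ 0 := by
  rw [Hmat, Matrix.det_smul]
  apply mul_ne_zero
  · apply pow_ne_zero
    apply inv_ne_zero
    apply mul_ne_zero Complex.I_ne_zero
    simp [Complex.ofReal_ne_zero]
  · rw [Matrix.det_fin_three]
    simp [Matrix.vecHead, Matrix.vecTail]
    intro h
    have h3 : ω ^ 3 = 1 := omega_cube
    have key : 3 * ω * (ω - 1) = 0 := by linear_combination h + ω * h3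
    rcases mul_eq_zero.mp key with h' | h'
    · rcases mul_eq_zero.mp h' with h'' | h''
      · norm_num at h''
      · exact omega_ne_zero h''
    · exact omega_ne_one (by linear_combination h')

/-- X as an element of GL(3, ℂ). -/
def Xg : GL (Fin 3) ℂ := Matrix.GeneralLinearGroup.mkOfDetNeZero Xmat detX

/-- Z as an element of GL(3, ℂ). -/
def Zg : GL (Fin 3) ℂ := Matrix.GeneralLinearGroup.mkOfDetNeZero Zmat detZ

/-- H as an element of GL(3, ℂ). -/
def Hg : GL (Fin 3) ℂ := Matrix.GeneralLinearGroup.mkOfDetNeZero Hmat detH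

/-- S as an element of GL(3, ℂ). -/
def Sg : GL (Fin 3) ℂ := Matrix.GeneralLinearGroup.mkOfDetNeZero Smat detS

/-- T as an element of GL(3, ℂ). -/
def Tg : GL (Fin 3) ℂ := Matrix.GeneralLinearGroup.mkOfDetNeZero Tmat detT

/-- The Clifford group 𝒞: the subgroup of GL(3,ℂ) generated by H and S. -/
def Cliff : Subgroup (GL (Fin 3) ℂ) := Subgroup.closure {Hg, Sg}

/-- The Clifford+T group: the subgroup of GL(3,ℂ) generated by H, S and T. -/
def CliffT : Subgroup (GL (Fin 3) ℂ) := Subgroup.closure {Hg, Sg, Tg}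

/-- The subgroup 𝒮 of GL(3,ℂ) generated by S and X. -/
def Sgrp : Subgroup (GL (Fin 3) ℂ) := Subgroup.closure {Sg, Xg}

/-- Letters of words over the alphabet {H, S, T}. -/
inductive Letter : Type
  | H : Letter
  | S : Letter
  | T : Letter
  deriving DecidableEq

/-- The gate associated to a letter. -/
def Letter.g : Letter → GL (Fin 3) ℂ
  | .H => Hg
  | .S => Sg
  | .T => Tg

/-- The product of the letters of a word. -/
def wordProd (w : List Letter) : GL (Fin 3) ℂ := (w.map Letter.g).prod

/-- The allowed prefixes of a canonical form: ε, T, H²T. -/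
def Prefixes : Set (List Letter) := {[], [.T], [.H, .H, .T]}

/-- The allowed syllables of a canonical form: HT, H³T, SHT, SH³T, S²HT, S²H³T. -/
def Syllables : Set (List Letter) :=
  {[.H, .T], [.H, .H, .H, .T], [.S, .H, .T],
   [.S, .H, .H, .H, .T], [.S, .S, .H, .T], [.S, .S, .H, .H, .H, .T]}

/-- The T-count of a canonical form with prefix `p` and syllable list `ss`:
`k` if the prefix is empty and `k+1` otherwise, where `k` is the number of syllables. -/
def TCount (p : List Letter) (ss : List (List Letter)) : ℕ :=
  ss.length + (if p = [] then 0 else 1)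

/-- P₊ = (P + P²)/√6. -/
def Pplus (P : Matrix (Fin 3) (Fin 3) ℂ) : Matrix (Fin 3) (Fin 3) ℂ :=
  ((Real.sqrt 6 : ℂ))⁻¹ • (P + P ^ 2)

/-- P₋ = i(P − P²)/√6. -/
def Pminus (P : Matrix (Fin 3) (Fin 3) ℂ) : Matrix (Fin 3) (Fin 3) ℂ :=
  (I * ((Real.sqrt 6 : ℂ))⁻¹) • (P - P ^ 2)

/-- The ordered tuple (Q₁, …, Q₈) = (Z₊, X₊, (XZ)₊, (XZ²)₊, Z₋, X₋, (XZ)₋, (XZ²)₋). -/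
def Q : Fin 8 → Matrix (Fin 3) (Fin 3) ℂ :=
  ![Pplus Zmat, Pplus Xmat, Pplus (Xmat * Zmat), Pplus (Xmat * Zmat ^ 2),
    Pminus Zmat, Pminus Xmat, Pminus (Xmat * Zmat), Pminus (Xmat * Zmat ^ 2)]

/-- The adjoint representation Û of U, the 8×8 real matrix with
entries Û_{ij} = tr(Qᵢ U Qⱼ U†). -/
def adj (U : Matrix (Fin 3) (Fin 3) ℂ) : Matrix (Fin 8) (Fin 8) ℝ :=
  Matrix.of fun i j => (Matrix.trace (Q i * U * Q j * Uᴴ)).re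

/-- The top-left 4×4 quadrant Û₊₊. -/
def blockPP (A : Matrix (Fin 8) (Fin 8) ℝ) : Matrix (Fin 4) (Fin 4) ℝ :=
  Matrix.of fun i j => A ⟨i.val, by omega⟩ ⟨j.val, by omega⟩

/-- The top-right 4×4 quadrant Û₊₋. -/
def blockPM (A : Matrix (Fin 8) (Fin 8) ℝ) : Matrix (Fin 4) (Fin 4) ℝ :=
  Matrix.of fun i j => A ⟨i.val, by omega⟩ ⟨j.val + 4, by omega⟩

/-- The bottom-left 4×4 quadrant Û₋₊. -/
def blockMP (A : Matrix (Fin 8) (Fin 8) ℝ) : Matrix (Fin 4) (Fin 4) ℝ :=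
  Matrix.of fun i j => A ⟨i.val + 4, by omega⟩ ⟨j.val, by omega⟩

/-- The bottom-right 4×4 quadrant Û₋₋. -/
def blockMM (A : Matrix (Fin 8) (Fin 8) ℝ) : Matrix (Fin 4) (Fin 4) ℝ :=
  Matrix.of fun i j => A ⟨i.val + 4, by omega⟩ ⟨j.val + 4, by omega⟩

/-- α = sin(2π/9). -/
def αR : ℝ := Real.sin (2 * Real.pi / 9)

/-- The ring ℤ[α]: the subring of ℝ generated by 1/2 and α. -/
def Zα : Subring ℝ := Subring.closure {1/2, αR}

/-- The ring ℤ[1/2, 1/α]: the subring of ℝ generated by 1/2, α and α⁻¹. -/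
def Zhα : Subring ℝ := Subring.closure {1/2, αR, αR⁻¹}

lemma alpha_mem_Zα : αR ∈ Zα := Subring.subset_closure (by simp)

set_option linter.all false
set_option linter.unusedSimpArgs false
set_option linter.unnecessarySeqFocus false
set_option linter.unusedTactic false
set_option linter.unreachableTactic false

/-! ## Arithmetic of the constants -/

lemma zeta_eq_cos_sin : ζ = (Real.cos (2 * Real.pi / 9) : ℂ) + (αR : ℂ) * I := by
  have h : ζ = Complex.exp ((2 * Real.pi / 9 : ℝ) * I) := by
    rw [ζ]; push_cast; ring_nf
  rw [h, Complex.exp_mul_I, αR, Complex.ofReal_cos, Complex.ofReal_sin]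

lemma alpha_pos : 0 < αR := by
  apply Real.sin_pos_of_pos_of_lt_pi
  · positivity
  · nlinarith [Real.pi_pos]

lemma sqrt3_eq : Real.sqrt 3 = 6 * αR - 8 * αR ^ 3 := by
  have h := Real.sin_three_mul (2 * Real.pi / 9)
  have h2 : Real.sin (3 * (2 * Real.pi / 9)) = Real.sqrt 3 / 2 := by
    rw [show 3 * (2 * Real.pi / 9) = Real.pi - Real.pi / 3 by ring, Real.sin_pi_sub,
      Real.sin_pi_div_three]
  rw [h2] at h
  rw [αR]; linarith

lemma alpha_rel : 64 * αR ^ 6 - 96 * αR ^ 4 + 36 * αR ^ 2 - 3 = 0 := by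
  have h : Real.sqrt 3 ^ 2 = 3 := Real.sq_sqrt (by norm_num)
  rw [sqrt3_eq] at h
  linear_combination h

lemma cos_nine_eq : Real.cos (2 * Real.pi / 9) = -2 + 10 * αR ^ 2 - 8 * αR ^ 4 := by
  have h := Real.cos_three_mul (2 * Real.pi / 9)
  have h2 : Real.cos (3 * (2 * Real.pi / 9)) = - (1 / 2) := by
    rw [show 3 * (2 * Real.pi / 9) = Real.pi - Real.pi / 3 by ring, Real.cos_pi_sub,
      Real.cos_pi_div_three]
  rw [h2] at h
  have h3 : Real.cos (2 * Real.pi / 9) ^ 2 = 1 - αR ^ 2 := by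
    have := Real.sin_sq_add_cos_sq (2 * Real.pi / 9)
    rw [αR]; linarith
  have h4 := alpha_rel
  set c := Real.cos (2 * Real.pi / 9)
  have h5 : c * (1 - 4 * αR ^ 2) = - (1 / 2) := by
    linear_combination -h - 4 * c * h3
  have h6 : (-2 + 10 * αR ^ 2 - 8 * αR ^ 4) * (1 - 4 * αR ^ 2) = - (1 / 2) := by
    linear_combination (1 / 2) * h4
  have h7 : (1 - 4 * αR ^ 2) ≠ 0 := by
    intro h8; rw [h8] at h5; norm_num at h5
  exact mul_right_cancel₀ h7 (h5.trans h6.symm)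

/-- α as a complex number. -/
def αC : ℂ := (αR : ℂ)

lemma alphaC_rel : 64 * αC ^ 6 - 96 * αC ^ 4 + 36 * αC ^ 2 - 3 = 0 := by
  have := alpha_rel
  rw [αC]; exact_mod_cast this

lemma alphaC_ne : αC ≠ 0 := by
  rw [αC]; exact_mod_cast alpha_pos.ne'

lemma zeta_eq : ζ = (-2 + 10 * αC ^ 2 - 8 * αC ^ 4) + αC * I := by
  rw [zeta_eq_cos_sin, cos_nine_eq, αC]; push_cast; ring

lemma zeta_nine : ζ ^ 9 = 1 := by
  rw [ζ, ← Complex.exp_nat_mul]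
  rw [show ((9:ℕ):ℂ) * (2 * Real.pi * I / 9) = 2 * Real.pi * I by push_cast; ring]
  exact Complex.exp_two_pi_mul_I

lemma omega_eq : ω = ζ ^ 3 := by
  rw [ω, ζ, ← Complex.exp_nat_mul]
  congr 1; push_cast; ring

lemma zeta_rel : ζ ^ 6 + ζ ^ 3 + 1 = 0 := by
  have h : (ζ ^ 3 - 1) * (ζ ^ 6 + ζ ^ 3 + 1) = 0 := by linear_combination zeta_nine
  rcases mul_eq_zero.mp h with h | h
  · exact absurd (by rw [omega_eq]; linear_combination h) omega_ne_one
  · exact h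

lemma omega_eq2 : ω = -(1 / 2) + (3 * αC - 4 * αC ^ 3) * I := by
  have h : ω = Complex.exp ((2 * Real.pi / 3 : ℝ) * I) := by
    rw [ω]; push_cast; ring_nf
  have h1 : Real.cos (2 * Real.pi / 3) = - (1 / 2) := by
    rw [show (2 * Real.pi / 3) = Real.pi - Real.pi / 3 by ring, Real.cos_pi_sub,
      Real.cos_pi_div_three]
  have h2 : Real.sin (2 * Real.pi / 3) = 3 * αR - 4 * αR ^ 3 := by
    rw [show (2 * Real.pi / 3) = Real.pi - Real.pi / 3 by ring, Real.sin_pi_sub,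
      Real.sin_pi_div_three, sqrt3_eq]; ring
  rw [h, Complex.exp_mul_I, ← Complex.ofReal_cos, ← Complex.ofReal_sin, h1, h2, αC]
  push_cast; ring

lemma Isqrt3 : I * (Real.sqrt 3 : ℂ) = 1 + 2 * ζ ^ 3 := by
  rw [← omega_eq, omega_eq2, sqrt3_eq, αC]; push_cast; ring

lemma Isqrt3_inv : (I * (Real.sqrt 3 : ℂ))⁻¹ = -(1 + 2 * ζ ^ 3) / 3 := by
  rw [Isqrt3]
  have h : (1 + 2 * ζ ^ 3) * (-(1 + 2 * ζ ^ 3) / 3) = 1 := by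
    linear_combination (-4 / 3) * zeta_rel
  exact inv_eq_of_mul_eq_one_right h

lemma star_zeta : (starRingEnd ℂ) ζ = ζ ^ 8 := by
  have h : (starRingEnd ℂ) ζ * ζ = 1 := by
    rw [ζ, ← Complex.exp_conj, ← Complex.exp_add]
    simp [Complex.conj_ofReal, map_ofNat]
    ring_nf; simp
  have h2 := zeta_nine
  calc (starRingEnd ℂ) ζ = (starRingEnd ℂ) ζ * ζ ^ 9 := by rw [h2, mul_one]
    _ = ((starRingEnd ℂ) ζ * ζ) * ζ ^ 8 := by ring
    _ = ζ ^ 8 := by rw [h, one_mul]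

lemma Hmat_eq : Hmat = (-(1 + 2 * ζ ^ 3) / 3) • !![1,1,1; 1,ζ^3,ζ^6; 1,ζ^6,ζ^3] := by
  rw [Hmat, Isqrt3_inv, omega_eq, ← pow_mul]

lemma Smat_eq : Smat = !![ζ^8,0,0; 0,ζ^8,0; 0,0,ζ^2] := by
  rw [Smat, omega_eq]
  ext i j; fin_cases i <;> fin_cases j <;> simp
  linear_combination ζ ^ 2 * zeta_nine

lemma Zmat_eq : Zmat = !![1,0,0; 0,ζ^3,0; 0,0,ζ^6] := by
  rw [Zmat, omega_eq, ← pow_mul]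

lemma HmatH : Hmatᴴ = ((1 + 2 * ζ ^ 3) / 3) • !![1,1,1; 1,ζ^6,ζ^3; 1,ζ^3,ζ^6] := by
  have h9 := zeta_rel
  rw [Hmat_eq]
  ext i j; fin_cases i <;> fin_cases j <;>
    simp [Matrix.conjTranspose_apply, star_zeta, Matrix.vecHead, Matrix.vecTail] <;> grind

lemma SmatH : Smatᴴ = !![ζ,0,0; 0,ζ,0; 0,0,ζ^7] := by
  have h9 := zeta_nine
  rw [Smat_eq]
  ext i j; fin_cases i <;> fin_cases j <;>
    simp [Matrix.conjTranspose_apply, star_zeta, Matrix.vecHead, Matrix.vecTail] <;> grind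

lemma TmatH : Tmatᴴ = !![1,0,0; 0,ζ^8,0; 0,0,ζ] := by
  have h9 := zeta_nine
  rw [Tmat]
  ext i j; fin_cases i <;> fin_cases j <;>
    simp [Matrix.conjTranspose_apply, star_zeta, Matrix.vecHead, Matrix.vecTail] <;> grind

lemma XmatH : Xmatᴴ = !![0,1,0; 0,0,1; 1,0,0] := by
  rw [Xmat]
  ext i j; fin_cases i <;> fin_cases j <;>
    simp [Matrix.conjTranspose_apply]

/-! ## 1 is not divisible by α -/

/-- α as an element of ℤ[α]. -/
def αz : Zα := ⟨αR, alpha_mem_Zα⟩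

/-- 1/2 as an element of ℤ[α]. -/
def hf : Zα := ⟨1/2, Subring.subset_closure (by simp)⟩

lemma coe_αz : ((αz : Zα) : ℝ) = αR := rfl
lemma coe_hf : ((hf : Zα) : ℝ) = 1 / 2 := rfl

lemma hf_two : 2 * hf = 1 := by
  apply Subtype.ext
  change (2 : ℝ) * (1 / 2) = 1
  norm_num

lemma αz_rel : 64 * αz ^ 6 - 96 * αz ^ 4 + 36 * αz ^ 2 - 3 = 0 := by
  apply Subtype.ext; push_cast; rw [coe_αz]; exact alpha_rel

lemma two_alpha_integral : IsIntegral ℤ (2 * αR) := by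
  have h := alpha_rel
  refine ⟨Polynomial.X ^ 6 - 6 * Polynomial.X ^ 4 + 9 * Polynomial.X ^ 2 - 3, ?_, ?_⟩
  · monicity!
  · simp
    linear_combination h

lemma Zα_integral (y : ℝ) (hy : y ∈ Zα) : ∃ j : ℕ, IsIntegral ℤ (2 ^ j * y) := by
  have two : IsIntegral ℤ (2 : ℝ) := by
    have := isIntegral_algebraMap (R := ℤ) (A := ℝ) (x := 2)
    simpa using this
  refine Subring.closure_induction (p := fun y _ => ∃ j : ℕ, IsIntegral ℤ (2 ^ j * y))
    ?_ ?_ ?_ ?_ ?_ ?_ hy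
  · intro x hx
    rcases hx with rfl | rfl
    · exact ⟨1, by simpa using isIntegral_one⟩
    · exact ⟨1, by simpa using two_alpha_integral⟩
  · exact ⟨0, by simpa using isIntegral_zero⟩
  · exact ⟨0, by simpa using isIntegral_one⟩
  · rintro x y _ _ ⟨i, hi⟩ ⟨j, hj⟩
    refine ⟨i + j, ?_⟩
    have := ((two.pow j).mul hi).add ((two.pow i).mul hj)
    rw [show (2:ℝ) ^ (i + j) * (x + y) = 2 ^ j * (2 ^ i * x) + 2 ^ i * (2 ^ j * y) by ring]
    exact this
  · rintro x _ ⟨i, hi⟩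
    refine ⟨i, ?_⟩
    have := hi.neg
    rw [show (2:ℝ) ^ i * (-x) = -(2 ^ i * x) by ring]
    exact this
  · rintro x y _ _ ⟨i, hi⟩ ⟨j, hj⟩
    refine ⟨i + j, ?_⟩
    have := hi.mul hj
    rw [show (2:ℝ) ^ (i + j) * (x * y) = (2 ^ i * x) * (2 ^ j * y) by ring]
    exact this

lemma not_α_dvd_one : ¬ αz ∣ 1 := by
  rintro ⟨y, hy⟩
  have hy' : (1 : ℝ) = αR * y := by
    have := congrArg (Subtype.val) hy
    exact this
  obtain ⟨j, hj⟩ := Zα_integral y y.2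
  have hr := alpha_rel
  have key : IsIntegral ℤ ((2 * (2 * αR) ^ 4 - 3 * (2 * αR) ^ 2 + 1) * (2 ^ j * (y : ℝ)) ^ 6) := by
    have n2 : IsIntegral ℤ (2 : ℝ) := by
      have := isIntegral_algebraMap (R := ℤ) (A := ℝ) (x := 2)
      simpa using this
    have n3 : IsIntegral ℤ (3 : ℝ) := by
      have := isIntegral_algebraMap (R := ℤ) (A := ℝ) (x := 3)
      simpa using this
    exact (((n2.mul (two_alpha_integral.pow 4)).sub (n3.mul (two_alpha_integral.pow 2))).add
      isIntegral_one).mul (hj.pow 6)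
  have e : (2 * (2 * αR) ^ 4 - 3 * (2 * αR) ^ 2 + 1) * (2 ^ j * (y : ℝ)) ^ 6
      = (((2 : ℚ) ^ (6 * j + 6) / 3 : ℚ) : ℝ) := by
    have h1 : (αR * (y : ℝ)) ^ 6 = 1 := by rw [← hy']; norm_num
    push_cast
    rw [pow_add, pow_mul', mul_pow]
    linear_combination (-(1 / 3) * ((2:ℝ) ^ j) ^ 6 * (y : ℝ) ^ 6) * hr +
      (64 / 3 * ((2:ℝ) ^ j) ^ 6) * h1
  rw [e] at key
  have key2 : IsIntegral ℤ ((2 : ℚ) ^ (6 * j + 6) / 3 : ℚ) := by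
    have := (isIntegral_algebraMap_iff (R := ℤ) (A := ℚ) (B := ℝ)
      (FaithfulSMul.algebraMap_injective ℚ ℝ) (x := (2 : ℚ) ^ (6 * j + 6) / 3)).mp
    apply this
    simpa using key
  obtain ⟨m, hm⟩ := IsIntegrallyClosed.isIntegral_iff.mp key2
  have h3 : (3 : ℤ) * m = 2 ^ (6 * j + 6) := by
    have : (3 : ℚ) * m = 2 ^ (6 * j + 6) := by
      simp at hm; rw [hm]; ring
    exact_mod_cast this
  have : (3 : ℤ) ∣ 2 ^ (6 * j + 6) := ⟨m, h3.symm⟩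
  have := Int.prime_three.dvd_of_dvd_pow this
  norm_num at this

/-! ## Relations between the generators -/

lemma coe_Hg : (Hg : Matrix (Fin 3) (Fin 3) ℂ) = Hmat := rfl
lemma coe_Sg : (Sg : Matrix (Fin 3) (Fin 3) ℂ) = Smat := rfl
lemma coe_Tg : (Tg : Matrix (Fin 3) (Fin 3) ℂ) = Tmat := rfl
lemma coe_Xg : (Xg : Matrix (Fin 3) (Fin 3) ℂ) = Xmat := rfl
lemma coe_Zg : (Zg : Matrix (Fin 3) (Fin 3) ℂ) = Zmat := rfl

lemma Hmat_sq : Hmat * Hmat = !![-1,0,0; 0,0,-1; 0,-1,0] := by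
  have h := zeta_rel
  rw [Hmat_eq]
  ext i j; fin_cases i <;> fin_cases j <;>
    simp [Matrix.mul_apply, Fin.sum_univ_three] <;> grind

lemma rel_H4 : Hg ^ 4 = 1 := by
  apply Units.ext
  rw [show Hg ^ 4 = (Hg * Hg) * (Hg * Hg) by simp only [pow_succ, pow_zero, one_mul, mul_assoc]]
  push_cast
  rw [coe_Hg, Hmat_sq]
  ext i j; fin_cases i <;> fin_cases j <;> simp [Matrix.mul_apply, Fin.sum_univ_three]

lemma rel_S9 : Sg ^ 9 = 1 := by
  have h := zeta_nine
  apply Units.ext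
  push_cast
  rw [coe_Sg, Smat_eq]
  have : (!![ζ^8,0,0; 0,ζ^8,0; 0,0,ζ^2] : Matrix (Fin 3) (Fin 3) ℂ) =
    Matrix.diagonal ![ζ^8, ζ^8, ζ^2] := by
    ext i j; fin_cases i <;> fin_cases j <;> simp
  rw [this, Matrix.diagonal_pow, ← Matrix.diagonal_one]
  congr 1
  ext i; fin_cases i
  · simp; linear_combination congrArg (· ^ 8) h
  · simp; linear_combination congrArg (· ^ 8) h
  · simp; linear_combination congrArg (· ^ 2) h

lemma rel_X3 : Xg ^ 3 = 1 := by
  apply Units.ext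
  push_cast
  rw [coe_Xg, Xmat, pow_succ, pow_two]
  ext i j; fin_cases i <;> fin_cases j <;> simp [Matrix.mul_apply, Fin.sum_univ_three]

lemma rel_T3 : Tg ^ 3 = Zg := by
  have h := zeta_nine
  apply Units.ext
  push_cast
  rw [coe_Tg, coe_Zg, Zmat_eq, Tmat, pow_succ, pow_two]
  ext i j; fin_cases i <;> fin_cases j <;> simp [Matrix.mul_apply, Fin.sum_univ_three] <;> grind

lemma rel_Z3 : Zg ^ 3 = 1 := by
  have h := zeta_nine
  apply Units.ext
  push_cast
  rw [coe_Zg, Zmat_eq, pow_succ, pow_two]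
  ext i j; fin_cases i <;> fin_cases j <;> simp [Matrix.mul_apply, Fin.sum_univ_three] <;> grind

lemma rel_T9 : Tg ^ 9 = 1 := by
  rw [show 9 = 3 * 3 by norm_num, pow_mul, rel_T3, rel_Z3]

lemma rel_TS : Tg * Sg = Sg * Tg := by
  apply Units.ext
  push_cast
  rw [coe_Tg, coe_Sg, Smat_eq, Tmat]
  ext i j; fin_cases i <;> fin_cases j <;> simp [Matrix.mul_apply, Fin.sum_univ_three] <;> ring

lemma rel_STX : Sg * Tg * Xg = Xg * Tg := by
  have h := zeta_nine
  apply Units.ext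
  push_cast
  rw [coe_Tg, coe_Sg, coe_Xg, Smat_eq, Tmat, Xmat]
  ext i j; fin_cases i <;> fin_cases j <;> simp [Matrix.mul_apply, Fin.sum_univ_three] <;> grind

lemma rel_THHT : Tg * (Hg * Hg) * Tg = Hg * Hg := by
  have h := zeta_nine
  apply Units.ext
  push_cast
  rw [coe_Tg, coe_Hg, Hmat_sq, Tmat]
  ext i j; fin_cases i <;> fin_cases j <;> simp [Matrix.mul_apply, Fin.sum_univ_three] <;> grind

lemma rel_XS : Xg * Sg = Sg * (Xg * (Zg * Zg)) := by
  have h := zeta_nine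
  apply Units.ext
  push_cast
  rw [coe_Zg, coe_Sg, coe_Xg, Smat_eq, Zmat_eq, Xmat]
  ext i j; fin_cases i <;> fin_cases j <;> simp [Matrix.mul_apply, Fin.sum_univ_three] <;> grind

lemma rel_ZS : Zg * Sg = Sg * Zg := by
  apply Units.ext
  push_cast
  rw [coe_Zg, coe_Sg, Smat_eq, Zmat_eq]
  ext i j; fin_cases i <;> fin_cases j <;> simp [Matrix.mul_apply, Fin.sum_univ_three] <;> ring

lemma rel_HHSZ : Hg * Hg * Sg * Zg = Sg * (Hg * Hg) := by
  have h := zeta_nine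
  apply Units.ext
  push_cast
  rw [coe_Zg, coe_Sg, coe_Hg, Hmat_sq, Smat_eq, Zmat_eq]
  ext i j; fin_cases i <;> fin_cases j <;> simp [Matrix.mul_apply, Fin.sum_univ_three] <;> grind

lemma rel_XHZ : Xg * Hg * Zg = Hg := by
  have h := zeta_nine
  apply Units.ext
  push_cast
  rw [coe_Zg, coe_Xg, coe_Hg, Hmat_eq, Zmat_eq, Xmat]
  ext i j; fin_cases i <;> fin_cases j <;> simp [Matrix.mul_apply, Fin.sum_univ_three] <;> grind

lemma rel_ZH : Zg * Hg = Hg * Xg := by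
  have h := zeta_nine
  apply Units.ext
  push_cast
  rw [coe_Zg, coe_Xg, coe_Hg, Hmat_eq, Zmat_eq, Xmat]
  ext i j; fin_cases i <;> fin_cases j <;> simp [Matrix.mul_apply, Fin.sum_univ_three] <;> grind

lemma rel_S3 : Sg * Sg * Sg * Zg * Xg = Xg * Zg := by
  have h := zeta_nine
  apply Units.ext
  push_cast
  rw [coe_Zg, coe_Xg, coe_Sg, Smat_eq, Zmat_eq, Xmat]
  ext i j; fin_cases i <;> fin_cases j <;> simp [Matrix.mul_apply, Fin.sum_univ_three] <;> grind

lemma rel_HSSH : Hg * (Sg * Sg) * Hg = Sg * (Sg * Sg * Sg) * Hg * Sg * Xg := by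
  have h := zeta_nine
  have h2 := zeta_rel
  apply Units.ext
  push_cast
  have e1 : Smat * Smat = !![ζ^7,0,0; 0,ζ^7,0; 0,0,ζ^4] := by
    rw [Smat_eq]
    ext i j; fin_cases i <;> fin_cases j <;> simp [Matrix.mul_apply, Fin.sum_univ_three] <;> grind
  have e2 : Smat * (Smat * Smat * Smat) = !![ζ^5,0,0; 0,ζ^5,0; 0,0,ζ^8] := by
    rw [e1, Smat_eq]
    ext i j; fin_cases i <;> fin_cases j <;> simp [Matrix.mul_apply, Fin.sum_univ_three] <;> grind
  rw [coe_Xg, coe_Sg, coe_Hg, e2, e1, Hmat_eq, Smat_eq, Xmat]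
  ext i j; fin_cases i <;> fin_cases j <;> simp [Matrix.mul_apply, Fin.sum_univ_three] <;> grind

lemma rel_HSH : Hg * Sg * Hg =
    Sg * Sg * (Sg * Sg * Sg) * Hg * (Sg * Sg) * ((Zg * Zg) * (Hg * Hg)) := by
  have h := zeta_nine
  have h2 := zeta_rel
  apply Units.ext
  push_cast
  have e1 : Smat * Smat = !![ζ^7,0,0; 0,ζ^7,0; 0,0,ζ^4] := by
    rw [Smat_eq]
    ext i j; fin_cases i <;> fin_cases j <;> simp [Matrix.mul_apply, Fin.sum_univ_three] <;> grind
  have e2 : Smat * Smat * (Smat * Smat * Smat) = !![ζ^4,0,0; 0,ζ^4,0; 0,0,ζ] := by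
    rw [e1, Smat_eq]
    ext i j; fin_cases i <;> fin_cases j <;> simp [Matrix.mul_apply, Fin.sum_univ_three] <;> grind
  have e3 : Zmat * Zmat * (Hmat * Hmat) = !![-1,0,0; 0,0,-ζ^6; 0,-ζ^3,0] := by
    rw [Hmat_sq, Zmat_eq]
    ext i j; fin_cases i <;> fin_cases j <;> simp [Matrix.mul_apply, Fin.sum_univ_three] <;> grind
  rw [coe_Zg, coe_Sg, coe_Hg, e2, e1, e3, Hmat_eq, Smat_eq]
  ext i j; fin_cases i <;> fin_cases j <;> simp [Matrix.mul_apply, Fin.sum_univ_three] <;> grind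

/-! ## Group structure: Bruhat-type decomposition and normal forms -/

/-- Left induction over a subgroup generated by elements of finite order. -/
lemma closure_ind_finite {G : Type*} [Group G] {s : Set G} (hs : ∀ x ∈ s, ∃ k : ℕ, x ^ (k + 1) = 1)
    {p : G → Prop} (h1 : p 1) (hm : ∀ x ∈ s, ∀ y, p y → p (x * y)) :
    ∀ g ∈ Subgroup.closure s, p g := by
  intro g hg
  have hpow : ∀ x ∈ s, ∀ k : ℕ, ∀ y, p y → p (x ^ k * y) := by
    intro x hx k
    induction k with
    | zero => intro y hy; simpa using hy
    | succ k ih =>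
      intro y hy
      rw [pow_succ', mul_assoc]
      exact hm x hx _ (ih y hy)
  refine Subgroup.closure_induction_left (p := fun g _ => p g) h1 ?_ ?_ hg
  · intro x hx y _ hy
    exact hm x hx y hy
  · intro x hx y _ hy
    obtain ⟨k, hk⟩ := hs x hx
    have : x⁻¹ = x ^ k := by
      rw [pow_succ] at hk
      exact (eq_inv_of_mul_eq_one_left hk).symm
    rw [this]
    exact hpow x hx k y hy

/-- The subgroup B generated by S, X and H². -/
def Bgrp : Subgroup (GL (Fin 3) ℂ) := Subgroup.closure {Sg, Xg, Hg * Hg}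

/-- The subgroup N generated by X, Z and H². -/
def Ngrp : Subgroup (GL (Fin 3) ℂ) := Subgroup.closure {Xg, Zg, Hg * Hg}

lemma HH_sq : (Hg * Hg) ^ (1 + 1) = 1 := by
  have := rel_H4
  simpa only [pow_succ, pow_zero, one_mul, mul_assoc] using this

lemma HH_inv : (Hg * Hg)⁻¹ = Hg * Hg := by
  have := HH_sq
  rw [pow_succ, pow_one] at this
  exact inv_eq_of_mul_eq_one_right this

lemma S_mem_B : Sg ∈ Bgrp := Subgroup.subset_closure (by simp)
lemma X_mem_B : Xg ∈ Bgrp := Subgroup.subset_closure (by simp)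
lemma HH_mem_B : Hg * Hg ∈ Bgrp := Subgroup.subset_closure (by simp)
lemma X_mem_N : Xg ∈ Ngrp := Subgroup.subset_closure (by simp)
lemma Z_mem_N : Zg ∈ Ngrp := Subgroup.subset_closure (by simp)
lemma HH_mem_N : Hg * Hg ∈ Ngrp := Subgroup.subset_closure (by simp)

lemma Z_eq : Zg = (Hg * Hg * Sg)⁻¹ * (Sg * (Hg * Hg)) := by
  rw [← rel_HHSZ]; group

lemma X_eq : Xg = Hg⁻¹ * Zg * Hg := by
  rw [mul_assoc, rel_ZH]; group

lemma Z_mem_B : Zg ∈ Bgrp := by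
  rw [Z_eq]
  exact Bgrp.mul_mem (Bgrp.inv_mem (Bgrp.mul_mem HH_mem_B S_mem_B)) (Bgrp.mul_mem S_mem_B HH_mem_B)

lemma N_le_B : Ngrp ≤ Bgrp := by
  rw [Ngrp, Subgroup.closure_le]
  rintro x (rfl | rfl | rfl)
  · exact X_mem_B
  · exact Z_mem_B
  · exact HH_mem_B

lemma H_mem_C : Hg ∈ Cliff := Subgroup.subset_closure (by simp)
lemma S_mem_C : Sg ∈ Cliff := Subgroup.subset_closure (by simp)
lemma Z_mem_C : Zg ∈ Cliff := by
  rw [Z_eq]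
  exact Cliff.mul_mem (Cliff.inv_mem (Cliff.mul_mem (Cliff.mul_mem H_mem_C H_mem_C) S_mem_C))
    (Cliff.mul_mem S_mem_C (Cliff.mul_mem H_mem_C H_mem_C))
lemma X_mem_C : Xg ∈ Cliff := by
  rw [X_eq]
  exact Cliff.mul_mem (Cliff.mul_mem (Cliff.inv_mem H_mem_C) Z_mem_C) H_mem_C

lemma B_le_C : Bgrp ≤ Cliff := by
  rw [Bgrp, Subgroup.closure_le]
  rintro x (rfl | rfl | rfl)
  · exact S_mem_C
  · exact X_mem_C
  · exact Cliff.mul_mem H_mem_C H_mem_C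

lemma conj_closure {G : Type*} [Group G] {s : Set G} (g : G)
    (h : ∀ x ∈ s, g⁻¹ * x * g ∈ Subgroup.closure s) :
    ∀ n ∈ Subgroup.closure s, g⁻¹ * n * g ∈ Subgroup.closure s := by
  intro n hn
  refine Subgroup.closure_induction (p := fun n _ => g⁻¹ * n * g ∈ Subgroup.closure s)
    (fun x hx => h x hx) ?_ ?_ ?_ hn
  · simp
  · intro x y _ _ hx hy
    have := Subgroup.mul_mem _ hx hy
    rw [show g⁻¹ * (x * y) * g = g⁻¹ * x * g * (g⁻¹ * y * g) by group]
    exact this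
  · intro x _ hx
    have := Subgroup.inv_mem _ hx
    rw [show g⁻¹ * x⁻¹ * g = (g⁻¹ * x * g)⁻¹ by group]
    exact this

lemma N_S (n : GL (Fin 3) ℂ) (hn : n ∈ Ngrp) : Sg⁻¹ * n * Sg ∈ Ngrp := by
  refine conj_closure Sg ?_ n hn
  rintro x (rfl | rfl | rfl)
  · rw [mul_assoc, rel_XS, inv_mul_cancel_left]
    exact Ngrp.mul_mem X_mem_N (Ngrp.mul_mem Z_mem_N Z_mem_N)
  · rw [mul_assoc, rel_ZS, inv_mul_cancel_left]
    exact Z_mem_N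
  · have : Hg * Hg * Sg = Sg * ((Hg * Hg) * Zg⁻¹) := by
      rw [← mul_assoc Sg, ← rel_HHSZ]; group
    rw [mul_assoc, this, inv_mul_cancel_left]
    exact Ngrp.mul_mem HH_mem_N (Ngrp.inv_mem Z_mem_N)

lemma N_H (n : GL (Fin 3) ℂ) (hn : n ∈ Ngrp) : Hg⁻¹ * n * Hg ∈ Ngrp := by
  refine conj_closure Hg ?_ n hn
  rintro x (rfl | rfl | rfl)
  · have : Xg * Hg = Hg * Zg⁻¹ := by
      nth_rewrite 2 [← rel_XHZ]; group
    rw [mul_assoc, this, inv_mul_cancel_left]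
    exact Ngrp.inv_mem Z_mem_N
  · rw [mul_assoc, rel_ZH, inv_mul_cancel_left]
    exact X_mem_N
  · rw [show Hg⁻¹ * (Hg * Hg) * Hg = Hg * Hg by group]
    exact HH_mem_N

lemma S3_mem_N : Sg * Sg * Sg ∈ Ngrp := by
  have : Sg * Sg * Sg = (Xg * Zg) * (Zg * Xg)⁻¹ := by
    rw [← rel_S3]; group
  rw [this]
  exact Ngrp.mul_mem (Ngrp.mul_mem X_mem_N Z_mem_N) (Ngrp.inv_mem (Ngrp.mul_mem Z_mem_N X_mem_N))

lemma N_S_move (n : GL (Fin 3) ℂ) (hn : n ∈ Ngrp) : ∃ n' ∈ Ngrp, n * Sg = Sg * n' :=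
  ⟨_, N_S n hn, by group⟩

lemma N_H_move (n : GL (Fin 3) ℂ) (hn : n ∈ Ngrp) : ∃ n' ∈ Ngrp, n * Hg = Hg * n' :=
  ⟨_, N_H n hn, by group⟩

lemma B_gen_fin : ∀ x ∈ ({Sg, Xg, Hg * Hg} : Set (GL (Fin 3) ℂ)), ∃ k : ℕ, x ^ (k + 1) = 1 := by
  rintro x (rfl | rfl | rfl)
  · exact ⟨8, rel_S9⟩
  · exact ⟨2, rel_X3⟩
  · exact ⟨1, HH_sq⟩

/-- Every element of B is n, S n or S² n with n in N. -/
lemma B_form (b : GL (Fin 3) ℂ) (hb : b ∈ Bgrp) :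
    ∃ n ∈ Ngrp, b = n ∨ b = Sg * n ∨ b = Sg * Sg * n := by
  have hN : ∀ x ∈ Ngrp, ∀ y, (∃ n ∈ Ngrp, y = n ∨ y = Sg * n ∨ y = Sg * Sg * n) →
      (∃ n ∈ Ngrp, x * y = n ∨ x * y = Sg * n ∨ x * y = Sg * Sg * n) := by
    rintro x hx y ⟨n, hn, rfl | rfl | rfl⟩
    · exact ⟨x * y, Ngrp.mul_mem hx hn, Or.inl rfl⟩
    · obtain ⟨x', hx', e⟩ := N_S_move x hx
      refine ⟨x' * n, Ngrp.mul_mem hx' hn, Or.inr (Or.inl ?_)⟩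
      rw [← mul_assoc, e, mul_assoc]
    · obtain ⟨x', hx', e⟩ := N_S_move x hx
      obtain ⟨x'', hx'', e'⟩ := N_S_move x' hx'
      refine ⟨x'' * n, Ngrp.mul_mem hx'' hn, Or.inr (Or.inr ?_)⟩
      calc x * (Sg * Sg * n) = (x * Sg) * Sg * n := by group
        _ = Sg * (x' * Sg) * n := by rw [e]; group
        _ = Sg * Sg * (x'' * n) := by rw [e']; group
  refine closure_ind_finite B_gen_fin
    (p := fun b => ∃ n ∈ Ngrp, b = n ∨ b = Sg * n ∨ b = Sg * Sg * n)
    ⟨1, Ngrp.one_mem, Or.inl rfl⟩ ?_ b hb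
  rintro x (rfl | rfl | rfl) y hy
  · obtain ⟨n, hn, rfl | rfl | rfl⟩ := hy
    · exact ⟨y, hn, Or.inr (Or.inl rfl)⟩
    · exact ⟨n, hn, Or.inr (Or.inr (by group))⟩
    · exact ⟨Sg * Sg * Sg * n, Ngrp.mul_mem S3_mem_N hn, Or.inl (by group)⟩
  · exact hN _ X_mem_N y hy
  · exact hN _ HH_mem_N y hy

/-- The double coset B H B. -/
def BHB (c : GL (Fin 3) ℂ) : Prop := ∃ b₁ ∈ Bgrp, ∃ b₂ ∈ Bgrp, c = b₁ * Hg * b₂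

lemma BHB_mul_left {b c : GL (Fin 3) ℂ} (hb : b ∈ Bgrp) (hc : BHB c) : BHB (b * c) := by
  obtain ⟨b₁, h₁, b₂, h₂, rfl⟩ := hc
  exact ⟨b * b₁, Bgrp.mul_mem hb h₁, b₂, h₂, by group⟩

lemma BHB_mul_right {b c : GL (Fin 3) ℂ} (hb : b ∈ Bgrp) (hc : BHB c) : BHB (c * b) := by
  obtain ⟨b₁, h₁, b₂, h₂, rfl⟩ := hc
  exact ⟨b₁, h₁, b₂ * b, Bgrp.mul_mem h₂ hb, by group⟩

lemma BHB_mem_C {c : GL (Fin 3) ℂ} (hc : BHB c) : c ∈ Cliff := by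
  obtain ⟨b₁, h₁, b₂, h₂, rfl⟩ := hc
  exact Cliff.mul_mem (Cliff.mul_mem (B_le_C h₁) H_mem_C) (B_le_C h₂)

lemma HBH (b : GL (Fin 3) ℂ) (hb : b ∈ Bgrp) : Hg * b * Hg ∈ Bgrp ∨ BHB (Hg * b * Hg) := by
  obtain ⟨n, hn, h⟩ := B_form b hb
  obtain ⟨n', hn', e⟩ := N_H_move n hn
  have hS2 := Bgrp.mul_mem S_mem_B S_mem_B
  have hS3 := Bgrp.mul_mem hS2 S_mem_B
  have hZ2 := Bgrp.mul_mem Z_mem_B Z_mem_B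
  rcases h with rfl | rfl | rfl
  · left
    rw [mul_assoc, e, ← mul_assoc]
    exact Bgrp.mul_mem HH_mem_B (N_le_B hn')
  · right
    have : Hg * (Sg * n) * Hg = Hg * Sg * Hg * n' := by
      rw [mul_assoc, mul_assoc, e]; group
    rw [this, rel_HSH]
    refine BHB_mul_right (N_le_B hn') ⟨_, Bgrp.mul_mem hS2 hS3, _,
      Bgrp.mul_mem hS2 (Bgrp.mul_mem hZ2 HH_mem_B), ?_⟩
    simp only [mul_assoc]
  · right
    have : Hg * (Sg * Sg * n) * Hg = Hg * (Sg * Sg) * Hg * n' := by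
      rw [mul_assoc, mul_assoc, e]; group
    rw [this, rel_HSSH]
    refine BHB_mul_right (N_le_B hn') ⟨_, Bgrp.mul_mem S_mem_B hS3, _,
      Bgrp.mul_mem S_mem_B X_mem_B, ?_⟩
    simp only [mul_assoc]

lemma C_gen_fin : ∀ x ∈ ({Hg, Sg} : Set (GL (Fin 3) ℂ)), ∃ k : ℕ, x ^ (k + 1) = 1 := by
  rintro x (rfl | rfl)
  · exact ⟨3, rel_H4⟩
  · exact ⟨8, rel_S9⟩

lemma CT_gen_fin : ∀ x ∈ ({Hg, Sg, Tg} : Set (GL (Fin 3) ℂ)), ∃ k : ℕ, x ^ (k + 1) = 1 := by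
  rintro x (rfl | rfl | rfl)
  · exact ⟨3, rel_H4⟩
  · exact ⟨8, rel_S9⟩
  · exact ⟨8, rel_T9⟩

/-- Bruhat decomposition of the Clifford group. -/
lemma bruhat (c : GL (Fin 3) ℂ) (hc : c ∈ Cliff) : c ∈ Bgrp ∨ BHB c := by
  refine closure_ind_finite C_gen_fin (p := fun c => c ∈ Bgrp ∨ BHB c)
    (Or.inl Bgrp.one_mem) ?_ c hc
  rintro x (rfl | rfl) y hy
  · rcases hy with hy | ⟨b₁, h₁, b₂, h₂, rfl⟩
    · exact Or.inr ⟨1, Bgrp.one_mem, y, hy, by group⟩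
    · rw [show Hg * (b₁ * Hg * b₂) = Hg * b₁ * Hg * b₂ by group]
      rcases HBH b₁ h₁ with h | h
      · exact Or.inl (Bgrp.mul_mem h h₂)
      · exact Or.inr (BHB_mul_right h₂ h)
  · rcases hy with hy | hy
    · exact Or.inl (Bgrp.mul_mem S_mem_B hy)
    · exact Or.inr (BHB_mul_left S_mem_B hy)

/-- T normalizes B up to inversion. -/
lemma T_B (b : GL (Fin 3) ℂ) (hb : b ∈ Bgrp) :
    (Tg * b * Tg⁻¹ ∈ Bgrp ∧ Tg⁻¹ * b * Tg ∈ Bgrp) ∨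
    (Tg * b * Tg ∈ Bgrp ∧ Tg⁻¹ * b * Tg⁻¹ ∈ Bgrp) := by
  refine closure_ind_finite B_gen_fin (p := fun b =>
    (Tg * b * Tg⁻¹ ∈ Bgrp ∧ Tg⁻¹ * b * Tg ∈ Bgrp) ∨
    (Tg * b * Tg ∈ Bgrp ∧ Tg⁻¹ * b * Tg⁻¹ ∈ Bgrp)) ?_ ?_ b hb
  · left; simp [Bgrp.one_mem]
  · have hcase : ∀ x ∈ ({Sg, Xg, Hg * Hg} : Set (GL (Fin 3) ℂ)),
        (Tg * x * Tg⁻¹ ∈ Bgrp ∧ Tg⁻¹ * x * Tg ∈ Bgrp) ∨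
        (Tg * x * Tg ∈ Bgrp ∧ Tg⁻¹ * x * Tg⁻¹ ∈ Bgrp) := by
      rintro x (rfl | rfl | rfl)
      · left
        constructor
        · rw [rel_TS, mul_inv_cancel_right]; exact S_mem_B
        · rw [mul_assoc, ← rel_TS, inv_mul_cancel_left]; exact S_mem_B
      · left
        constructor
        · have : Tg * Xg * Tg⁻¹ = Sg⁻¹ * Xg := by
            rw [show Tg * Xg = Sg⁻¹ * (Sg * Tg * Xg) by group, rel_STX]; group
          rw [this]; exact Bgrp.mul_mem (Bgrp.inv_mem S_mem_B) X_mem_B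
        · have : Tg⁻¹ * Xg * Tg = Sg * Xg := by
            rw [mul_assoc, ← rel_STX, ← rel_TS]; group
          rw [this]; exact Bgrp.mul_mem S_mem_B X_mem_B
      · right
        constructor
        · rw [rel_THHT]; exact HH_mem_B
        · have : Tg⁻¹ * (Hg * Hg) * Tg⁻¹ = Hg * Hg := by
            nth_rewrite 1 [← rel_THHT]; group
          rw [this]; exact HH_mem_B
    intro x hx y hy
    rcases hcase x hx with ⟨h1, h2⟩ | ⟨h1, h2⟩ <;> rcases hy with ⟨h3, h4⟩ | ⟨h3, h4⟩
    · left
      constructor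
      · convert Bgrp.mul_mem h1 h3 using 1; group
      · convert Bgrp.mul_mem h2 h4 using 1; group
    · right
      constructor
      · convert Bgrp.mul_mem h1 h3 using 1; group
      · convert Bgrp.mul_mem h2 h4 using 1; group
    · right
      constructor
      · convert Bgrp.mul_mem h1 h4 using 1; group
      · convert Bgrp.mul_mem h2 h3 using 1; group
    · left
      constructor
      · convert Bgrp.mul_mem h1 h4 using 1; group
      · convert Bgrp.mul_mem h2 h3 using 1; group

/-- Reduced elements starting with T on the left. -/
inductive RedT : ℕ → GL (Fin 3) ℂ → Prop
  | one (c : GL (Fin 3) ℂ) (hc : c ∈ Cliff) : RedT 1 (Tg * c)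
  | step (m : ℕ) (c u : GL (Fin 3) ℂ) (hc : BHB c) (hu : RedT m u) : RedT (m + 1) (Tg * (c * u))

/-- Normal forms. -/
inductive NF : ℕ → GL (Fin 3) ℂ → Prop
  | zero (c : GL (Fin 3) ℂ) (hc : c ∈ Cliff) : NF 0 c
  | pos (m : ℕ) (c u : GL (Fin 3) ℂ) (hc : c ∈ Cliff) (hu : RedT m u) : NF m (c * u)

lemma NF_mul_C {m : ℕ} {c u : GL (Fin 3) ℂ} (hc : c ∈ Cliff) (hu : NF m u) : NF m (c * u) := by
  cases hu with
  | zero d hd => exact NF.zero _ (Cliff.mul_mem hc hd)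
  | pos m d u hd hu =>
    rw [← mul_assoc]
    exact NF.pos _ _ _ (Cliff.mul_mem hc hd) hu

lemma Tinv_eq : Tg⁻¹ = (Hg * Hg) * Tg * (Hg * Hg) := by
  rw [inv_eq_iff_mul_eq_one]
  calc Tg * (Hg * Hg * Tg * (Hg * Hg)) = Tg * (Hg * Hg) * Tg * (Hg * Hg) := by group
    _ = (Hg * Hg) ^ (1 + 1) := by rw [rel_THHT, pow_succ, pow_one]
    _ = 1 := HH_sq

lemma NF_mul_T {m : ℕ} {U : GL (Fin 3) ℂ} (hU : NF m U) : ∃ m' ≤ m + 1, NF m' (Tg * U) := by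
  cases hU with
  | zero c hc =>
    refine ⟨1, le_refl _, ?_⟩
    rw [← one_mul (Tg * U)]
    exact NF.pos 1 1 _ Cliff.one_mem (RedT.one _ hc)
  | pos m c u hc hu =>
    rcases bruhat c hc with hB | hB
    · -- shortening
      have hT2 : ∀ v, Tg * c * Tg⁻¹ ∈ Bgrp → Tg * (c * (Tg * v)) =
          (Tg * c * Tg⁻¹ * (Zg * (Hg * Hg))) * (Tg * ((Hg * Hg) * v)) := by
        intro v _
        have e : Tg * Tg = Zg * Tg⁻¹ := by
          rw [← rel_T3, pow_succ, pow_two, mul_inv_cancel_right]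
        calc Tg * (c * (Tg * v)) = (Tg * c * Tg⁻¹) * (Tg * Tg) * v := by group
          _ = (Tg * c * Tg⁻¹) * (Zg * ((Hg * Hg) * Tg * (Hg * Hg))) * v := by rw [e, Tinv_eq]
          _ = _ := by group
      have hT0 : ∀ v, Tg * (c * (Tg * v)) = Tg * c * Tg * v := by intro v; group
      have hZH := Cliff.mul_mem Z_mem_C (B_le_C HH_mem_B)
      cases hu with
      | one d hd =>
        rcases T_B c hB with ⟨h, -⟩ | ⟨h, -⟩
        · rw [hT2 _ h]
          exact ⟨1, by omega, NF.pos _ _ _ (Cliff.mul_mem (B_le_C h) hZH)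
            (RedT.one _ (Cliff.mul_mem (B_le_C HH_mem_B) hd))⟩
        · rw [hT0]
          exact ⟨0, by omega, NF.zero _ (Cliff.mul_mem (B_le_C h) hd)⟩
      | step m d u hd hu =>
        rcases T_B c hB with ⟨h, -⟩ | ⟨h, -⟩
        · rw [hT2 _ h, ← mul_assoc (Hg * Hg) d u]
          exact ⟨m + 1, by omega, NF.pos _ _ _ (Cliff.mul_mem (B_le_C h) hZH)
            (RedT.step _ _ _ (BHB_mul_left HH_mem_B hd) hu)⟩
        · rw [hT0, ← mul_assoc]
          exact ⟨m, by omega, NF.pos _ _ _ (Cliff.mul_mem (B_le_C h) (BHB_mem_C hd)) hu⟩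
    · refine ⟨m + 1, le_refl _, ?_⟩
      rw [← one_mul (Tg * (c * u))]
      exact NF.pos _ 1 _ Cliff.one_mem (RedT.step _ _ _ hB hu)

lemma wordProd_nil : wordProd [] = 1 := rfl
lemma wordProd_cons (l : Letter) (w : List Letter) : wordProd (l :: w) = l.g * wordProd w := by
  simp [wordProd]
lemma wordProd_append (w v : List Letter) : wordProd (w ++ v) = wordProd w * wordProd v := by
  simp [wordProd]

lemma word_NF (w : List Letter) : ∃ m ≤ w.count Letter.T, NF m (wordProd w) := by
  induction w with
  | nil => exact ⟨0, by simp, NF.zero _ Cliff.one_mem⟩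
  | cons l w ih =>
    obtain ⟨m, hm, h⟩ := ih
    rw [wordProd_cons]
    cases l with
    | H => exact ⟨m, by simpa using hm, NF_mul_C H_mem_C h⟩
    | S => exact ⟨m, by simpa using hm, NF_mul_C S_mem_C h⟩
    | T =>
      obtain ⟨m', hm', h'⟩ := NF_mul_T h
      exact ⟨m', by simp; omega, h'⟩

lemma C_word (c : GL (Fin 3) ℂ) (hc : c ∈ Cliff) :
    ∃ w : List Letter, wordProd w = c ∧ w.count Letter.T = 0 := by
  refine closure_ind_finite C_gen_fin
    (p := fun c => ∃ w : List Letter, wordProd w = c ∧ w.count Letter.T = 0)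
    ⟨[], rfl, rfl⟩ ?_ c hc
  rintro x (rfl | rfl) y ⟨w, rfl, hw⟩
  · exact ⟨.H :: w, wordProd_cons _ _, by simpa using hw⟩
  · exact ⟨.S :: w, wordProd_cons _ _, by simpa using hw⟩

lemma CT_word (c : GL (Fin 3) ℂ) (hc : c ∈ CliffT) : ∃ w : List Letter, wordProd w = c := by
  refine closure_ind_finite CT_gen_fin
    (p := fun c => ∃ w : List Letter, wordProd w = c) ⟨[], rfl⟩ ?_ c hc
  rintro x (rfl | rfl | rfl) y ⟨w, rfl⟩
  · exact ⟨.H :: w, wordProd_cons _ _⟩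
  · exact ⟨.S :: w, wordProd_cons _ _⟩
  · exact ⟨.T :: w, wordProd_cons _ _⟩

lemma RedT_word {m : ℕ} {u : GL (Fin 3) ℂ} (hu : RedT m u) :
    ∃ w : List Letter, wordProd w = u ∧ w.count Letter.T = m := by
  induction hu with
  | one c hc =>
    obtain ⟨w, rfl, hw⟩ := C_word c hc
    exact ⟨.T :: w, wordProd_cons _ _, by simpa using hw⟩
  | step m c u hc hu ih =>
    obtain ⟨w, rfl, hw⟩ := C_word c (BHB_mem_C hc)
    obtain ⟨v, rfl, hv⟩ := ih
    exact ⟨.T :: (w ++ v), by rw [wordProd_cons, wordProd_append]; rfl, by simp [hw, hv]⟩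

lemma NF_word {m : ℕ} {u : GL (Fin 3) ℂ} (hu : NF m u) :
    ∃ w : List Letter, wordProd w = u ∧ w.count Letter.T = m := by
  cases hu with
  | zero c hc => exact C_word _ hc
  | pos m c u hc hu =>
    obtain ⟨w, rfl, hw⟩ := C_word c hc
    obtain ⟨v, rfl, hv⟩ := RedT_word hu
    exact ⟨w ++ v, wordProd_append _ _, by simp [hw, hv]⟩

/-! ## Coordinates in the Pauli basis -/

/-- The four Paulis Z, X, XZ, XZ². -/
def fP : Fin 4 → Matrix (Fin 3) (Fin 3) ℂ := ![Zmat, Xmat, Xmat * Zmat, Xmat * Zmat ^ 2]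

/-- The linear functionals M ↦ tr(P M). -/
def cf (k : Fin 4) (M : Matrix (Fin 3) (Fin 3) ℂ) : ℂ := Matrix.trace (fP k * M)

/-- Explicit formulas for the functionals. -/
lemma cf_formula (M : Matrix (Fin 3) (Fin 3) ℂ) :
    cf 0 M = M 0 0 + ζ ^ 3 * M 1 1 + ζ ^ 6 * M 2 2 ∧
    cf 1 M = M 0 1 + M 1 2 + M 2 0 ∧
    cf 2 M = M 0 1 + ζ ^ 3 * M 1 2 + ζ ^ 6 * M 2 0 ∧
    cf 3 M = M 0 1 + ζ ^ 6 * M 1 2 + ζ ^ 3 * M 2 0 := by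
  have h := zeta_nine
  have hZ2 : Xmat * Zmat = !![0,0,ζ^6; 1,0,0; 0,ζ^3,0] := by
    rw [Xmat, Zmat_eq]
    ext i j; fin_cases i <;> fin_cases j <;> simp [Matrix.mul_apply, Fin.sum_univ_three]
  have hZ3 : Xmat * Zmat ^ 2 = !![0,0,ζ^3; 1,0,0; 0,ζ^6,0] := by
    rw [pow_two, ← mul_assoc, hZ2, Zmat_eq]
    ext i j; fin_cases i <;> fin_cases j <;> simp [Matrix.mul_apply, Fin.sum_univ_three] <;> grind
  refine ⟨?_, ?_, ?_, ?_⟩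
  · change Matrix.trace (Zmat * M) = _
    rw [Zmat_eq]
    simp only [Matrix.trace_fin_three, Matrix.mul_apply, Fin.sum_univ_three]
    simp
  · change Matrix.trace (Xmat * M) = _
    rw [Xmat]
    simp only [Matrix.trace_fin_three, Matrix.mul_apply, Fin.sum_univ_three]
    simp; ring
  · change Matrix.trace (Xmat * Zmat * M) = _
    rw [hZ2]
    simp only [Matrix.trace_fin_three, Matrix.mul_apply, Fin.sum_univ_three]
    simp; ring
  · change Matrix.trace (Xmat * Zmat ^ 2 * M) = _
    rw [hZ3]
    simp only [Matrix.trace_fin_three, Matrix.mul_apply, Fin.sum_univ_three]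
    simp; ring

lemma cf0 (M : Matrix (Fin 3) (Fin 3) ℂ) : cf 0 M = M 0 0 + ζ ^ 3 * M 1 1 + ζ ^ 6 * M 2 2 :=
  (cf_formula M).1
lemma cf1 (M : Matrix (Fin 3) (Fin 3) ℂ) : cf 1 M = M 0 1 + M 1 2 + M 2 0 :=
  (cf_formula M).2.1
lemma cf2 (M : Matrix (Fin 3) (Fin 3) ℂ) : cf 2 M = M 0 1 + ζ ^ 3 * M 1 2 + ζ ^ 6 * M 2 0 :=
  (cf_formula M).2.2.1
lemma cf3 (M : Matrix (Fin 3) (Fin 3) ℂ) : cf 3 M = M 0 1 + ζ ^ 6 * M 1 2 + ζ ^ 3 * M 2 0 :=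
  (cf_formula M).2.2.2

/-- Action of S on coordinates. -/
lemma S_cf (M : Matrix (Fin 3) (Fin 3) ℂ) :
    cf 0 (Smat * M * Smatᴴ) = cf 0 M ∧ cf 1 (Smat * M * Smatᴴ) = cf 3 M ∧
    cf 2 (Smat * M * Smatᴴ) = cf 1 M ∧ cf 3 (Smat * M * Smatᴴ) = cf 2 M := by
  have h := zeta_nine
  rw [SmatH, Smat_eq]
  simp only [cf0, cf1, cf2, cf3, Matrix.mul_apply, Fin.sum_univ_three]
  simp
  refine ⟨?_, ?_, ?_, ?_⟩ <;> grind

/-- Action of X on coordinates. -/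
lemma X_cf (M : Matrix (Fin 3) (Fin 3) ℂ) :
    cf 0 (Xmat * M * Xmatᴴ) = ζ ^ 3 * cf 0 M ∧ cf 1 (Xmat * M * Xmatᴴ) = cf 1 M ∧
    cf 2 (Xmat * M * Xmatᴴ) = ζ ^ 3 * cf 2 M ∧ cf 3 (Xmat * M * Xmatᴴ) = ζ ^ 6 * cf 3 M := by
  have h := zeta_nine
  rw [XmatH, Xmat]
  simp only [cf0, cf1, cf2, cf3, Matrix.mul_apply, Fin.sum_univ_three]
  simp
  refine ⟨?_, ?_, ?_, ?_⟩ <;> grind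

/-- Action of T on coordinates. -/
lemma T_cf (M : Matrix (Fin 3) (Fin 3) ℂ) :
    cf 0 (Tmat * M * Tmatᴴ) = cf 0 M ∧
    cf 1 (Tmat * M * Tmatᴴ) = -(ζ ^ 8 * (1 + 2 * ζ ^ 3) / 3) * (cf 1 M + cf 2 M + cf 3 M)
      - ζ ^ 5 * (cf 1 M + cf 2 M) ∧
    cf 2 (Tmat * M * Tmatᴴ) = -(ζ ^ 8 * (1 + 2 * ζ ^ 3) / 3) * (cf 1 M + cf 2 M + cf 3 M)
      - ζ ^ 5 * (cf 2 M + cf 3 M) ∧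
    cf 3 (Tmat * M * Tmatᴴ) = -(ζ ^ 8 * (1 + 2 * ζ ^ 3) / 3) * (cf 1 M + cf 2 M + cf 3 M)
      - ζ ^ 5 * (cf 3 M + cf 1 M) := by
  have h := zeta_nine
  have h2 := zeta_rel
  rw [TmatH, Tmat]
  simp only [cf0, cf1, cf2, cf3, Matrix.mul_apply, Fin.sum_univ_three]
  simp
  refine ⟨?_, ?_, ?_, ?_⟩ <;> grind

/-- Action of H on coordinates. -/
lemma H_cf (M : Matrix (Fin 3) (Fin 3) ℂ) (hM : M.IsHermitian) :
    cf 0 (Hmat * M * Hmatᴴ) = cf 1 M ∧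
    cf 1 (Hmat * M * Hmatᴴ) = (starRingEnd ℂ) (cf 0 M) ∧
    cf 2 (Hmat * M * Hmatᴴ) = ζ ^ 6 * cf 3 M ∧
    cf 3 (Hmat * M * Hmatᴴ) = (starRingEnd ℂ) (cf 2 M) := by
  have h := zeta_nine
  have h2 := zeta_rel
  have hh : ∀ i j, (starRingEnd ℂ) (M i j) = M j i := fun i j => hM.apply j i
  rw [HmatH, Hmat_eq]
  simp only [cf0, cf1, cf2, cf3, Matrix.mul_apply, Fin.sum_univ_three, Matrix.smul_apply]
  simp [hh, star_zeta]
  refine ⟨?_, ?_, ?_, ?_⟩ <;> grind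

/-! ## Numerators -/

/-- The embedding of ℤ[α] into ℂ. -/
def cz : Zα →+* ℂ := Complex.ofRealHom.comp Zα.subtype

lemma cz_α : cz αz = αC := rfl

lemma cz_hf : cz hf = 1 / 2 := by
  change (((1 / 2 : ℝ)) : ℂ) = 1 / 2
  push_cast; rfl

lemma cz_conj (x : Zα) : (starRingEnd ℂ) (cz x) = cz x := Complex.conj_ofReal _

lemma αC_conj : (starRingEnd ℂ) αC = αC := Complex.conj_ofReal _

/-- `z` has numerators `x`, `y` at level `n`. -/
def rp (n : ℕ) (z : ℂ) (x y : Zα) : Prop :=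
  αC ^ (2 * n + 1) * z = 3 * (αC * cz x + I * cz y)

lemma rp_conj {n : ℕ} {z : ℂ} {x y : Zα} (h : rp n z x y) : rp n ((starRingEnd ℂ) z) x (-y) := by
  unfold rp at *
  have := congrArg (starRingEnd ℂ) h
  simp only [map_mul, map_pow, αC_conj, map_add, cz_conj, Complex.conj_I, map_ofNat] at this
  rw [this, map_neg]; ring

/-- The unit μ with √3/2 = α³ μ. -/
def mu : Zα := 32 * (1 - 2 * αz ^ 2) * (1 - αz ^ 2)

lemma zeta3_mu : ζ ^ 3 = -(1 / 2) + αC ^ 3 * cz mu * I := by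
  rw [← omega_eq, omega_eq2]
  simp only [mu, map_mul, map_sub, map_pow, cz_α, map_one, map_ofNat]
  linear_combination (-αC * I) * alphaC_rel

lemma zeta6_mu : ζ ^ 6 = -(1 / 2) - αC ^ 3 * cz mu * I := by
  linear_combination zeta_rel - zeta3_mu

lemma rp_z3 {n : ℕ} {z : ℂ} {x y : Zα} (h : rp n z x y) :
    rp n (ζ ^ 3 * z) (-hf * x - αz ^ 2 * mu * y) (-hf * y + αz ^ 4 * mu * x) := by
  unfold rp at *
  simp only [map_mul, map_sub, map_add, map_neg, map_pow, cz_α, cz_hf]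
  linear_combination ζ ^ 3 * h + 3 * (αC * cz x + I * cz y) * zeta3_mu
    + 3 * αC ^ 3 * cz mu * cz y * I_sq

lemma rp_z6 {n : ℕ} {z : ℂ} {x y : Zα} (h : rp n z x y) :
    rp n (ζ ^ 6 * z) (-hf * x + αz ^ 2 * mu * y) (-hf * y - αz ^ 4 * mu * x) := by
  unfold rp at *
  simp only [map_mul, map_sub, map_add, map_neg, map_pow, cz_α, cz_hf]
  linear_combination ζ ^ 6 * h + 3 * (αC * cz x + I * cz y) * zeta6_mu
    - 3 * αC ^ 3 * cz mu * cz y * I_sq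

/-- Multiplication by a cube root of unity only changes numerators slightly. -/
def Ph (n : ℕ) (z z' : ℂ) : Prop := ∀ x y : Zα, rp n z x y → ∃ x' y' : Zα, rp n z' x' y' ∧
  αz ∣ x' - x ∧ αz ^ 3 ∣ y' - y ∧ (x = 0 → y = 0 → x' = 0 ∧ y' = 0)

lemma three_eq : (3 : Zα) = αz ^ 2 * (36 - 96 * αz ^ 2 + 64 * αz ^ 4) := by
  linear_combination -αz_rel

lemma three_eq6 : (3 : Zα) = αz ^ 6 * (4 * mu ^ 2) := by
  have key : ∀ {R : Type} [CommRing R] (x : R), 64 * x ^ 6 - 96 * x ^ 4 + 36 * x ^ 2 - 3 = 0 →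
      3 = x ^ 6 * (4 * (32 * (1 - 2 * x ^ 2) * (1 - x ^ 2)) ^ 2) := by
    intro R _ x h
    grind
  exact key αz αz_rel

lemma Ph_z3 (n : ℕ) (z : ℂ) : Ph n z (ζ ^ 3 * z) := by
  intro x y h
  refine ⟨_, _, rp_z3 h, ⟨-hf * αz ^ 5 * (4 * mu ^ 2) * x - αz * mu * y, ?_⟩,
    ⟨-hf * αz ^ 3 * (4 * mu ^ 2) * y + αz * mu * x, ?_⟩, ?_⟩
  · linear_combination -hf * x * three_eq6 + x * hf_two
  · linear_combination -hf * y * three_eq6 + y * hf_two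
  · rintro rfl rfl; simp

lemma Ph_z6 (n : ℕ) (z : ℂ) : Ph n z (ζ ^ 6 * z) := by
  intro x y h
  refine ⟨_, _, rp_z6 h, ⟨-hf * αz ^ 5 * (4 * mu ^ 2) * x + αz * mu * y, ?_⟩,
    ⟨-hf * αz ^ 3 * (4 * mu ^ 2) * y - αz * mu * x, ?_⟩, ?_⟩
  · linear_combination -hf * x * three_eq6 + x * hf_two
  · linear_combination -hf * y * three_eq6 + y * hf_two
  · rintro rfl rfl; simp

/-- Numerators of a Hermitian matrix. -/
def PRep (n : ℕ) (M : Matrix (Fin 3) (Fin 3) ℂ) (a b : Fin 4 → Zα) : Prop :=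
  M.IsHermitian ∧ ∀ k, rp n (cf k M) (a k) (b k)

lemma forall_four {p : Fin 4 → Prop} (h0 : p 0) (h1 : p 1) (h2 : p 2) (h3 : p 3) : ∀ k, p k := by
  intro k; fin_cases k <;> assumption

lemma herm_conj {M : Matrix (Fin 3) (Fin 3) ℂ} (g : Matrix (Fin 3) (Fin 3) ℂ)
    (h : M.IsHermitian) : (g * M * gᴴ).IsHermitian :=
  Matrix.isHermitian_mul_mul_conjTranspose g h

lemma S_rep {n : ℕ} {M : Matrix (Fin 3) (Fin 3) ℂ} {a b : Fin 4 → Zα} (h : PRep n M a b) :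
    PRep n (Smat * M * Smatᴴ) ![a 0, a 3, a 1, a 2] ![b 0, b 3, b 1, b 2] := by
  obtain ⟨hM, h⟩ := h
  obtain ⟨e0, e1, e2, e3⟩ := S_cf M
  refine ⟨herm_conj _ hM, forall_four ?_ ?_ ?_ ?_⟩
  · rw [e0]; exact h 0
  · rw [e1]; exact h 3
  · rw [e2]; exact h 1
  · rw [e3]; exact h 2

lemma X_rep {n : ℕ} {M : Matrix (Fin 3) (Fin 3) ℂ} {a b : Fin 4 → Zα} (h : PRep n M a b) :
    ∃ a' b', PRep n (Xmat * M * Xmatᴴ) a' b' ∧ (∀ k, αz ∣ a' k - a k) ∧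
      ∀ k, αz ^ 3 ∣ b' k - b k := by
  obtain ⟨hM, h⟩ := h
  obtain ⟨e0, e1, e2, e3⟩ := X_cf M
  obtain ⟨x0, y0, r0, s0, t0, -⟩ := Ph_z3 n (cf 0 M) _ _ (h 0)
  obtain ⟨x2, y2, r2, s2, t2, -⟩ := Ph_z3 n (cf 2 M) _ _ (h 2)
  obtain ⟨x3, y3, r3, s3, t3, -⟩ := Ph_z6 n (cf 3 M) _ _ (h 3)
  refine ⟨![x0, a 1, x2, x3], ![y0, b 1, y2, y3],
    ⟨herm_conj _ hM, forall_four ?_ ?_ ?_ ?_⟩, forall_four ?_ ?_ ?_ ?_, forall_four ?_ ?_ ?_ ?_⟩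
  · rw [e0]; exact r0
  · rw [e1]; exact h 1
  · rw [e2]; exact r2
  · rw [e3]; exact r3
  · exact s0
  · simp
  · exact s2
  · exact s3
  · exact t0
  · simp
  · exact t2
  · exact t3

lemma H_rep {n : ℕ} {M : Matrix (Fin 3) (Fin 3) ℂ} {a b : Fin 4 → Zα} (h : PRep n M a b) :
    ∃ a' b', PRep n (Hmat * M * Hmatᴴ) a' b' ∧ a' 0 = a 1 ∧ b' 0 = b 1 ∧
      a' 1 = a 0 ∧ b' 1 = -b 0 ∧ αz ∣ a' 2 - a 3 ∧ αz ^ 3 ∣ b' 2 - b 3 ∧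
      (a 3 = 0 → b 3 = 0 → a' 2 = 0 ∧ b' 2 = 0) ∧ a' 3 = a 2 ∧ b' 3 = -b 2 := by
  obtain ⟨hM, h⟩ := h
  obtain ⟨e0, e1, e2, e3⟩ := H_cf M hM
  obtain ⟨x2, y2, r2, s2, t2, u2⟩ := Ph_z6 n (cf 3 M) _ _ (h 3)
  refine ⟨![a 1, a 0, x2, a 2], ![b 1, -b 0, y2, -b 2],
    ⟨herm_conj _ hM, forall_four ?_ ?_ ?_ ?_⟩, rfl, rfl, rfl, rfl, s2, t2, u2, rfl, rfl⟩
  · rw [e0]; exact h 1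
  · rw [e1]; exact rp_conj (h 0)
  · rw [e2]; exact r2
  · rw [e3]; exact rp_conj (h 2)

/-! ### The T gate -/

/-- The unit λ with 3 λ = α³ √3. -/
def lam : Zα := -2 * αz ^ 4 + 3 * hf * αz ^ 2 - hf ^ 3

/-- cos(2π/9). -/
def cc : Zα := -2 + 10 * αz ^ 2 - 8 * αz ^ 4

/-- cos(π/9). -/
def pp : Zα := -1 + 8 * αz ^ 2 - 8 * αz ^ 4

/-- sin(π/9)/α. -/
def qq : Zα := cc * (3 - 4 * αz ^ 2) - hf

lemma lam_unit : lam * (2 * mu) = 1 := by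
  have key : ∀ {R : Type} [CommRing R] (x t : R), 64 * x ^ 6 - 96 * x ^ 4 + 36 * x ^ 2 - 3 = 0 →
      2 * t = 1 → (-2 * x ^ 4 + 3 * t * x ^ 2 - t ^ 3) * (2 * (32 * (1 - 2 * x ^ 2) * (1 - x ^ 2))) = 1 := by
    intro R _ x t h ht
    grind
  exact key αz hf αz_rel hf_two

lemma T_const1 : αC ^ 3 * (ζ ^ 8 * (1 + 2 * ζ ^ 3) / 3) = cz lam * (αC + I * cz cc) := by
  have h := alphaC_rel
  have e3 := omega_eq2
  have e8 : ζ ^ 8 = (-2 + 10 * αC ^ 2 - 8 * αC ^ 4) - αC * I := by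
    rw [← star_zeta, zeta_eq]
    simp [αC_conj, map_ofNat]; ring
  rw [omega_eq] at e3
  rw [e8, e3]
  simp only [lam, cc, map_add, map_sub, map_mul, map_neg, map_pow, cz_α, cz_hf, map_ofNat]
  have hI := I_sq
  grind

lemma T_const2 : -ζ ^ 5 = cz pp + αC * cz qq * I := by
  have h := alphaC_rel
  have e3 := omega_eq2
  have e8 : ζ ^ 8 = (-2 + 10 * αC ^ 2 - 8 * αC ^ 4) - αC * I := by
    rw [← star_zeta, zeta_eq]
    simp [αC_conj, map_ofNat]; ring
  rw [omega_eq] at e3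
  have e5 : ζ ^ 5 = ζ ^ 8 * ζ ^ 3 * ζ ^ 3 := by linear_combination -ζ ^ 5 * zeta_nine
  rw [e5, e8, e3]
  simp only [pp, qq, cc, map_add, map_sub, map_mul, map_neg, map_pow, cz_α, cz_hf, map_ofNat, map_one]
  have hI := I_sq
  grind

/-- New numerators (real parts). -/
def Ta (s t x y : Zα) : Zα := -lam * (s - cc * αz * t) + αz ^ 2 * (pp * x - qq * y)

/-- New numerators (imaginary parts). -/
def Tb (s t x y : Zα) : Zα :=
  -lam * (cc * s + αz ^ 3 * t) + αz ^ 2 * (pp * y + αz ^ 2 * qq * x)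

lemma T_rp {n : ℕ} {σ w z : ℂ} {s τ t x y : Zα} (hσ : rp n σ s τ) (ht : τ = αz ^ 3 * t)
    (hw : rp n w x y) (hz : z = -(ζ ^ 8 * (1 + 2 * ζ ^ 3) / 3) * σ - ζ ^ 5 * w) :
    rp (n + 1) z (Ta s t x y) (Tb s t x y) := by
  have h1 := T_const1
  have h2 := T_const2
  unfold rp at *
  subst ht hz
  simp only [Ta, Tb, map_add, map_sub, map_mul, map_neg, map_pow, cz_α] at *
  have e : αC ^ (2 * (n + 1) + 1) = αC ^ 2 * αC ^ (2 * n + 1) := by ring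
  rw [e]
  linear_combination (-αC ^ 2 * (ζ ^ 8 * (1 + 2 * ζ ^ 3) / 3)) * hσ
    - (3 * (cz s + I * αC ^ 2 * cz t)) * h1 - αC ^ 2 * ζ ^ 5 * hw
    + 3 * αC ^ 2 * (αC * cz x + I * cz y) * h2
    + (-3 * cz lam * cz cc * αC ^ 2 * cz t + 3 * αC ^ 3 * cz qq * cz y) * I_sq

lemma rp_add {n : ℕ} {z w : ℂ} {x y u v : Zα} (h : rp n z x y) (h' : rp n w u v) :
    rp n (z + w) (x + u) (y + v) := by
  unfold rp at *
  rw [map_add, map_add]; linear_combination h + h'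

lemma T_rep {n : ℕ} {M : Matrix (Fin 3) (Fin 3) ℂ} {a b : Fin 4 → Zα} (h : PRep n M a b)
    {t : Zα} (ht : b 1 + b 2 + b 3 = αz ^ 3 * t) :
    PRep (n + 1) (Tmat * M * Tmatᴴ)
      ![αz ^ 2 * a 0, Ta (a 1 + a 2 + a 3) t (a 1 + a 2) (b 1 + b 2),
        Ta (a 1 + a 2 + a 3) t (a 2 + a 3) (b 2 + b 3),
        Ta (a 1 + a 2 + a 3) t (a 3 + a 1) (b 3 + b 1)]
      ![αz ^ 2 * b 0, Tb (a 1 + a 2 + a 3) t (a 1 + a 2) (b 1 + b 2),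
        Tb (a 1 + a 2 + a 3) t (a 2 + a 3) (b 2 + b 3),
        Tb (a 1 + a 2 + a 3) t (a 3 + a 1) (b 3 + b 1)] := by
  obtain ⟨hM, h⟩ := h
  obtain ⟨e0, e1, e2, e3⟩ := T_cf M
  have hs := rp_add (rp_add (h 1) (h 2)) (h 3)
  refine ⟨herm_conj _ hM, forall_four ?_ ?_ ?_ ?_⟩
  · rw [e0]
    have := h 0
    change rp (n + 1) _ (αz ^ 2 * a 0) (αz ^ 2 * b 0)
    unfold rp at *
    simp only [map_mul, map_pow, cz_α]
    rw [show αC ^ (2 * (n + 1) + 1) = αC ^ 2 * αC ^ (2 * n + 1) by ring]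
    linear_combination αC ^ 2 * this
  · exact T_rp hs ht (rp_add (h 1) (h 2)) e1
  · exact T_rp hs ht (rp_add (h 2) (h 3)) e2
  · exact T_rp hs ht (rp_add (h 3) (h 1)) e3

/-! ## Congruence conditions on the numerators -/

section generic
variable {R : Type} [CommRing R]

/-- Condition before applying T. -/
def DC (α : R) (f : Prop) (a b : Fin 4 → R) : Prop :=
  α ^ 3 ∣ b 1 + b 2 + b 3 ∧ α ∣ b 2 - b 1 - b 0 ∧ α ∣ b 3 - b 2 - b 0 ∧
    (f → ¬ α ∣ a 1 + a 2 + a 3)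

/-- Condition after applying T. -/
def PC (α : R) (f : Prop) (a b : Fin 4 → R) : Prop :=
  α ^ 2 ∣ b 0 ∧ α ∣ a 0 ∧ α ^ 3 ∣ b 2 - b 1 - b 0 ∧ α ^ 3 ∣ b 3 - b 2 - b 0 ∧
    α ∣ a 2 - a 1 ∧ α ∣ a 3 - a 1 ∧ (f → ¬ α ∣ a 1)

lemma d_iff (α x : R) : α ∣ x ↔ Ideal.Quotient.mk (Ideal.span {α}) x = 0 :=
  (Ideal.Quotient.eq_zero_iff_dvd α x).symm

lemma d31 {α x : R} (h : α ^ 3 ∣ x) : α ∣ x := (dvd_pow_self α (by norm_num)).trans h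
lemma d21 {α x : R} (h : α ^ 2 ∣ x) : α ∣ x := (dvd_pow_self α (by norm_num)).trans h
lemma d32 {α x : R} (h : α ^ 3 ∣ x) : α ^ 2 ∣ x := (pow_dvd_pow α (by norm_num)).trans h

lemma d_congr {α x y : R} (h : α ∣ y - x) : α ∣ y ↔ α ∣ x := by
  constructor
  · intro h'
    have := dvd_sub h' h
    rwa [sub_sub_cancel] at this
  · intro h'
    have := dvd_add h h'
    rwa [sub_add_cancel] at this

lemma DC_congr {α : R} {f : Prop} {a b a' b' : Fin 4 → R} (h : DC α f a b)
    (ha : ∀ k, α ∣ a' k - a k) (hb : ∀ k, α ^ 3 ∣ b' k - b k) : DC α f a' b' := by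
  obtain ⟨h1, h2, h3, h4⟩ := h
  have hb' := fun k => d31 (hb k)
  refine ⟨?_, ?_, ?_, fun hf h => h4 hf ?_⟩
  · rw [d_congr (x := b 1 + b 2 + b 3)]; exact h1
    have := dvd_add (dvd_add (hb 1) (hb 2)) (hb 3)
    convert this using 1; ring
  · rw [d_congr (x := b 2 - b 1 - b 0)]; exact h2
    have := dvd_sub (dvd_sub (hb' 2) (hb' 1)) (hb' 0)
    convert this using 1; ring
  · rw [d_congr (x := b 3 - b 2 - b 0)]; exact h3
    have := dvd_sub (dvd_sub (hb' 3) (hb' 2)) (hb' 0)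
    convert this using 1; ring
  · rw [← d_congr (y := a' 1 + a' 2 + a' 3)]; exact h
    have := dvd_add (dvd_add (ha 1) (ha 2)) (ha 3)
    convert this using 1; ring

lemma PC_congr {α : R} {f : Prop} {a b a' b' : Fin 4 → R} (h : PC α f a b)
    (ha : ∀ k, α ∣ a' k - a k) (hb : ∀ k, α ^ 3 ∣ b' k - b k) : PC α f a' b' := by
  obtain ⟨h1, h2, h3, h4, h5, h6, h7⟩ := h
  refine ⟨?_, ?_, ?_, ?_, ?_, ?_, fun hf h => h7 hf ?_⟩
  · rw [d_congr (x := b 0)]; exact h1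
    exact d32 (hb 0)
  · rw [d_congr (ha 0)]; exact h2
  · rw [d_congr (x := b 2 - b 1 - b 0)]; exact h3
    have := dvd_sub (dvd_sub (hb 2) (hb 1)) (hb 0)
    convert this using 1; ring
  · rw [d_congr (x := b 3 - b 2 - b 0)]; exact h4
    have := dvd_sub (dvd_sub (hb 3) (hb 2)) (hb 0)
    convert this using 1; ring
  · rw [d_congr (x := a 2 - a 1)]; exact h5
    have := dvd_sub (ha 2) (ha 1)
    convert this using 1; ring
  · rw [d_congr (x := a 3 - a 1)]; exact h6
    have := dvd_sub (ha 3) (ha 1)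
    convert this using 1; ring
  · exact (d_congr (ha 1)).mp h

lemma DC_neg {α : R} {f : Prop} {a b : Fin 4 → R} (h : DC α f a b) : DC α f a (-b) := by
  obtain ⟨h1, h2, h3, h4⟩ := h
  refine ⟨?_, ?_, ?_, h4⟩
  · convert h1.neg_right using 1; simp only [Pi.neg_apply]; ring
  · convert h2.neg_right using 1; simp only [Pi.neg_apply]; ring
  · convert h3.neg_right using 1; simp only [Pi.neg_apply]; ring

lemma PC_neg {α : R} {f : Prop} {a b : Fin 4 → R} (h : PC α f a b) : PC α f a (-b) := by
  obtain ⟨h1, h2, h3, h4, h5, h6, h7⟩ := h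
  refine ⟨?_, h2, ?_, ?_, h5, h6, h7⟩
  · exact h1.neg_right
  · convert h3.neg_right using 1; simp only [Pi.neg_apply]; ring
  · convert h4.neg_right using 1; simp only [Pi.neg_apply]; ring

lemma DC_S {α : R} {f : Prop} {a b : Fin 4 → R} (h3 : α ∣ 3) (h : DC α f a b) :
    DC α f ![a 0, a 3, a 1, a 2] ![b 0, b 3, b 1, b 2] := by
  obtain ⟨k1, k2, k3, k4⟩ := h
  change α ^ 3 ∣ b 3 + b 1 + b 2 ∧ α ∣ b 1 - b 3 - b 0 ∧ α ∣ b 2 - b 1 - b 0 ∧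
    (f → ¬ α ∣ a 3 + a 1 + a 2)
  refine ⟨?_, ?_, k2, ?_⟩
  · convert k1 using 1; ring
  · have := dvd_add (dvd_add (h3.mul_right (b 0)) k2) k3
    convert this.neg_right using 1; ring
  · rw [show a 3 + a 1 + a 2 = a 1 + a 2 + a 3 by ring]; exact k4

lemma PC_S {α : R} {f : Prop} {a b : Fin 4 → R} (h3 : α ∣ 3) (h : PC α f a b) :
    PC α f ![a 0, a 3, a 1, a 2] ![b 0, b 3, b 1, b 2] := by
  obtain ⟨k1, k2, k3, k4, k5, k6, k7⟩ := h
  change α ^ 2 ∣ b 0 ∧ α ∣ a 0 ∧ α ^ 3 ∣ b 1 - b 3 - b 0 ∧ α ^ 3 ∣ b 2 - b 1 - b 0 ∧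
    α ∣ a 1 - a 3 ∧ α ∣ a 2 - a 3 ∧ (f → ¬ α ∣ a 3)
  refine ⟨k1, k2, ?_, k3, ?_, ?_, ?_⟩
  · have h30 : α ^ 3 ∣ 3 * b 0 := by
      rw [show α ^ 3 = α * α ^ 2 by ring]; exact mul_dvd_mul h3 k1
    have := dvd_add (dvd_add h30 k3) k4
    convert this.neg_right using 1; ring
  · convert k6.neg_right using 1; ring
  · convert dvd_sub k5 k6 using 1; ring
  · rw [d_congr k6]; exact k7

/-- H turns the condition after T into the condition before T. -/
lemma PC_H {α t : R} {f : Prop} {a b a' b' : Fin 4 → R} (h3 : α ∣ 3) (ht : 2 * t = 1)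
    (h : PC α f a b) (e0 : a' 0 = a 1) (f0 : b' 0 = b 1) (e1 : a' 1 = a 0) (f1 : b' 1 = -b 0)
    (e2 : α ∣ a' 2 - a 3) (f2 : α ^ 3 ∣ b' 2 - b 3) (e3 : a' 3 = a 2) (f3 : b' 3 = -b 2) :
    DC α f a' b' := by
  obtain ⟨k1, k2, k3, k4, k5, k6, k7⟩ := h
  refine ⟨?_, ?_, ?_, fun hf h => k7 hf ?_⟩
  · rw [f1, f3]
    convert dvd_add k4 f2 using 1; ring
  · rw [f0, f1]
    have := dvd_add (d31 f2) (dvd_add (dvd_add (d31 k4) (d31 k3)) (h3.mul_right (b 0)))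
    convert this using 1; ring
  · rw [f0, f3]
    have := dvd_add (dvd_add (d31 f2) (dvd_add (d31 k4) (dvd_add (d31 k3) (d31 k3))))
      (dvd_add (h3.mul_right (b 0)) (h3.mul_right (b 1)))
    convert this.neg_right using 1; ring
  · rw [e1, e3] at h
    have := dvd_sub h (dvd_add (dvd_add e2 k6) (dvd_add k2 k5))
    have := this.mul_left t
    convert this using 1
    linear_combination -a 1 * ht

end generic

lemma α_dvd_three : αz ∣ (3 : Zα) := by
  rw [three_eq]
  exact ⟨αz * (36 - 96 * αz ^ 2 + 64 * αz ^ 4), by ring⟩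

/-- T turns the condition before T into the condition after T. -/
lemma DC_T {f : Prop} {a b : Fin 4 → Zα} {t : Zα} (h : DC αz f a b)
    (ht : b 1 + b 2 + b 3 = αz ^ 3 * t) :
    PC αz f ![αz ^ 2 * a 0, Ta (a 1 + a 2 + a 3) t (a 1 + a 2) (b 1 + b 2),
        Ta (a 1 + a 2 + a 3) t (a 2 + a 3) (b 2 + b 3),
        Ta (a 1 + a 2 + a 3) t (a 3 + a 1) (b 3 + b 1)]
      ![αz ^ 2 * b 0, Tb (a 1 + a 2 + a 3) t (a 1 + a 2) (b 1 + b 2),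
        Tb (a 1 + a 2 + a 3) t (a 2 + a 3) (b 2 + b 3),
        Tb (a 1 + a 2 + a 3) t (a 3 + a 1) (b 3 + b 1)] := by
  obtain ⟨k1, ⟨u, hu⟩, ⟨v, hv⟩, k4⟩ := h
  have h3 := three_eq
  set s := a 1 + a 2 + a 3 with hs
  change αz ^ 2 ∣ αz ^ 2 * b 0 ∧ αz ∣ αz ^ 2 * a 0 ∧
    αz ^ 3 ∣ Tb s t (a 2 + a 3) (b 2 + b 3) - Tb s t (a 1 + a 2) (b 1 + b 2) - αz ^ 2 * b 0 ∧
    αz ^ 3 ∣ Tb s t (a 3 + a 1) (b 3 + b 1) - Tb s t (a 2 + a 3) (b 2 + b 3) - αz ^ 2 * b 0 ∧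
    αz ∣ Ta s t (a 2 + a 3) (b 2 + b 3) - Ta s t (a 1 + a 2) (b 1 + b 2) ∧
    αz ∣ Ta s t (a 3 + a 1) (b 3 + b 1) - Ta s t (a 1 + a 2) (b 1 + b 2) ∧
    (f → ¬ αz ∣ Ta s t (a 1 + a 2) (b 1 + b 2))
  refine ⟨dvd_mul_right _ _, ⟨αz * a 0, by ring⟩,
    ⟨-(αz * (36 - 96 * αz ^ 2 + 64 * αz ^ 4)) * b 0 - (u + v) + αz * (8 - 8 * αz ^ 2) * (b 3 - b 1)
      + αz * qq * (a 3 - a 1), ?_⟩,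
    ⟨u + αz * (8 - 8 * αz ^ 2) * (b 1 - b 2) + αz * qq * (a 1 - a 2), ?_⟩,
    ⟨αz * (pp * (a 3 - a 1) - qq * (b 3 - b 1)), ?_⟩,
    ⟨αz * (pp * (a 3 - a 2) - qq * (b 3 - b 2)), ?_⟩, fun hf h => k4 hf ?_⟩
  · rw [Tb, Tb, pp]
    linear_combination -αz ^ 2 * hu - αz ^ 2 * hv - αz ^ 2 * b 0 * h3
  · rw [Tb, Tb, pp]
    linear_combination αz ^ 2 * hu
  · rw [Ta, Ta]; ring
  · rw [Ta, Ta]; ring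
  · have hl := lam_unit
    obtain ⟨w, hw⟩ := h
    rw [Ta] at hw
    refine ⟨2 * mu * (-w + lam * cc * t + αz * (pp * (a 1 + a 2) - qq * (b 1 + b 2))), ?_⟩
    linear_combination (-2 * mu) * hw - s * hl

/-! ## Matrix-level conditions -/

/-- Conjugation of a matrix by a group element. -/
def cj (g : GL (Fin 3) ℂ) (M : Matrix (Fin 3) (Fin 3) ℂ) : Matrix (Fin 3) (Fin 3) ℂ :=
  (g : Matrix (Fin 3) (Fin 3) ℂ) * M * (g : Matrix (Fin 3) (Fin 3) ℂ)ᴴ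

lemma cj_one (M : Matrix (Fin 3) (Fin 3) ℂ) : cj 1 M = M := by
  simp [cj]

lemma cj_mul (g h : GL (Fin 3) ℂ) (M : Matrix (Fin 3) (Fin 3) ℂ) :
    cj (g * h) M = cj g (cj h M) := by
  simp only [cj, Units.val_mul, Matrix.conjTranspose_mul, Matrix.mul_assoc]

/-- Before T. -/
def DM (f : Prop) (n : ℕ) (M : Matrix (Fin 3) (Fin 3) ℂ) : Prop :=
  ∃ a b, PRep n M a b ∧ DC αz f a b

/-- After T. -/
def PM (f : Prop) (n : ℕ) (M : Matrix (Fin 3) (Fin 3) ℂ) : Prop :=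
  ∃ a b, PRep n M a b ∧ PC αz f a b

/-- Weak condition. -/
def WM (f : Prop) (n : ℕ) (M : Matrix (Fin 3) (Fin 3) ℂ) : Prop :=
  ∃ a b, PRep n M a b ∧ (f → ∃ k, ¬ αz ∣ a k)

/-- Monomial condition. -/
def Mono (l : Fin 4) (M : Matrix (Fin 3) (Fin 3) ℂ) : Prop :=
  ∃ a b, PRep 0 M a b ∧ (∀ k, k ≠ l → a k = 0 ∧ b k = 0) ∧ αz ^ 3 ∣ b l ∧ ¬ αz ∣ a l

lemma HH_rep {n : ℕ} {M : Matrix (Fin 3) (Fin 3) ℂ} {a b : Fin 4 → Zα} (h : PRep n M a b) :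
    ∃ a' b', PRep n (cj (Hg * Hg) M) a' b' ∧ (∀ k, αz ∣ a' k - a k) ∧
      ∀ k, αz ^ 3 ∣ b' k - (-b) k := by
  obtain ⟨x, y, h1, r⟩ := H_rep h
  obtain ⟨z, w, h2, q⟩ := H_rep h1
  obtain ⟨r0, s0, r1, s1, r2, s2, -, r3, s3⟩ := r
  obtain ⟨q0, p0, q1, p1, q2, p2, -, q3, p3⟩ := q
  refine ⟨z, w, by rw [cj_mul]; exact h2, forall_four ?_ ?_ ?_ ?_, forall_four ?_ ?_ ?_ ?_⟩
  · rw [q0, r1, sub_self]; exact dvd_zero _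
  · rw [q1, r0, sub_self]; exact dvd_zero _
  · rw [← r3]; exact q2
  · rw [q3]; exact r2
  · rw [p0, s1, Pi.neg_apply, sub_self]; exact dvd_zero _
  · rw [p1, s0, Pi.neg_apply, sub_self]; exact dvd_zero _
  · rw [Pi.neg_apply, ← s3]; exact p2
  · rw [p3, Pi.neg_apply, show -y 2 - -b 3 = -(y 2 - b 3) by ring]; exact s2.neg_right

lemma DM_B {f : Prop} {n : ℕ} (g : GL (Fin 3) ℂ) (hg : g ∈ Bgrp) :
    ∀ M, DM f n M → DM f n (cj g M) := by
  refine closure_ind_finite B_gen_fin (p := fun g => ∀ M, DM f n M → DM f n (cj g M)) ?_ ?_ g hg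
  · intro M h; rwa [cj_one]
  · intro x hx y hy M hM
    rw [cj_mul]
    obtain ⟨a, b, hr, hd⟩ := hy M hM
    rcases hx with rfl | rfl | rfl
    · exact ⟨_, _, S_rep hr, DC_S α_dvd_three hd⟩
    · obtain ⟨a', b', h1, h2, h3⟩ := X_rep hr
      exact ⟨a', b', h1, DC_congr hd h2 h3⟩
    · obtain ⟨a', b', h1, h2, h3⟩ := HH_rep hr
      exact ⟨a', b', h1, DC_congr (DC_neg hd) h2 h3⟩

lemma PM_B {f : Prop} {n : ℕ} (g : GL (Fin 3) ℂ) (hg : g ∈ Bgrp) :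
    ∀ M, PM f n M → PM f n (cj g M) := by
  refine closure_ind_finite B_gen_fin (p := fun g => ∀ M, PM f n M → PM f n (cj g M)) ?_ ?_ g hg
  · intro M h; rwa [cj_one]
  · intro x hx y hy M hM
    rw [cj_mul]
    obtain ⟨a, b, hr, hd⟩ := hy M hM
    rcases hx with rfl | rfl | rfl
    · exact ⟨_, _, S_rep hr, PC_S α_dvd_three hd⟩
    · obtain ⟨a', b', h1, h2, h3⟩ := X_rep hr
      exact ⟨a', b', h1, PC_congr hd h2 h3⟩
    · obtain ⟨a', b', h1, h2, h3⟩ := HH_rep hr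
      exact ⟨a', b', h1, PC_congr (PC_neg hd) h2 h3⟩

lemma PM_H {f : Prop} {n : ℕ} {M : Matrix (Fin 3) (Fin 3) ℂ} (h : PM f n M) :
    DM f n (cj Hg M) := by
  obtain ⟨a, b, hr, hd⟩ := h
  obtain ⟨x, y, h1, r0, s0, r1, s1, r2, s2, -, r3, s3⟩ := H_rep hr
  exact ⟨x, y, h1, PC_H α_dvd_three hf_two hd r0 s0 r1 s1 r2 s2 r3 s3⟩

lemma PM_BHB {f : Prop} {n : ℕ} {M : Matrix (Fin 3) (Fin 3) ℂ} {c : GL (Fin 3) ℂ} (hc : BHB c)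
    (h : PM f n M) : DM f n (cj c M) := by
  obtain ⟨b₁, h₁, b₂, h₂, rfl⟩ := hc
  rw [cj_mul, cj_mul]
  exact DM_B b₁ h₁ _ (PM_H (PM_B b₂ h₂ _ h))

lemma DM_T {f : Prop} {n : ℕ} {M : Matrix (Fin 3) (Fin 3) ℂ} (h : DM f n M) :
    PM f (n + 1) (cj Tg M) := by
  obtain ⟨a, b, hr, hd⟩ := h
  obtain ⟨t, ht⟩ := hd.1
  exact ⟨_, _, T_rep hr ht, DC_T hd ht⟩

lemma WM_C {f : Prop} {n : ℕ} (g : GL (Fin 3) ℂ) (hg : g ∈ Cliff) :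
    ∀ M, WM f n M → WM f n (cj g M) := by
  refine closure_ind_finite C_gen_fin (p := fun g => ∀ M, WM f n M → WM f n (cj g M)) ?_ ?_ g hg
  · intro M h; rwa [cj_one]
  · intro x hx y hy M hM
    rw [cj_mul]
    obtain ⟨a, b, hr, hd⟩ := hy M hM
    rcases hx with rfl | rfl
    · obtain ⟨x, y, h1, r0, s0, r1, s1, r2, s2, -, r3, s3⟩ := H_rep hr
      refine ⟨x, y, h1, fun hf => ?_⟩
      obtain ⟨k, hk⟩ := hd hf
      fin_cases k
      · exact ⟨1, by rw [r1]; exact hk⟩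
      · exact ⟨0, by rw [r0]; exact hk⟩
      · exact ⟨3, by rw [r3]; exact hk⟩
      · exact ⟨2, by rw [d_congr r2]; exact hk⟩
    · refine ⟨_, _, S_rep hr, fun hf => ?_⟩
      obtain ⟨k, hk⟩ := hd hf
      fin_cases k
      · exact ⟨0, hk⟩
      · exact ⟨2, hk⟩
      · exact ⟨3, hk⟩
      · exact ⟨1, hk⟩

lemma PM_W {f : Prop} {n : ℕ} {M : Matrix (Fin 3) (Fin 3) ℂ} (h : PM f n M) : WM f n M := by
  obtain ⟨a, b, hr, hd⟩ := h
  exact ⟨a, b, hr, fun hf => ⟨1, hd.2.2.2.2.2.2 hf⟩⟩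

lemma Mono_W {l : Fin 4} {M : Matrix (Fin 3) (Fin 3) ℂ} (h : Mono l M) : WM True 0 M := by
  obtain ⟨a, b, hr, -, -, h⟩ := h
  exact ⟨a, b, hr, fun _ => ⟨l, h⟩⟩

lemma Mono_D {l : Fin 4} {M : Matrix (Fin 3) (Fin 3) ℂ} (h : Mono l M) : DM False 0 M := by
  obtain ⟨a, b, hr, h1, h2, h3⟩ := h
  have hb : ∀ k, αz ^ 3 ∣ b k := by
    intro k
    by_cases hk : k = l
    · rw [hk]; exact h2
    · rw [(h1 k hk).2]; exact dvd_zero _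
  exact ⟨a, b, hr, dvd_add (dvd_add (hb 1) (hb 2)) (hb 3),
    d31 (dvd_sub (dvd_sub (hb 2) (hb 1)) (hb 0)), d31 (dvd_sub (dvd_sub (hb 3) (hb 2)) (hb 0)),
    fun h => h.elim⟩

lemma Mono_D1 {M : Matrix (Fin 3) (Fin 3) ℂ} (h : Mono 1 M) : DM True 0 M := by
  obtain ⟨a, b, hr, h1, h2, h3⟩ := h
  have hb : ∀ k, αz ^ 3 ∣ b k := by
    intro k
    by_cases hk : k = 1
    · rw [hk]; exact h2
    · rw [(h1 k hk).2]; exact dvd_zero _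
  refine ⟨a, b, hr, dvd_add (dvd_add (hb 1) (hb 2)) (hb 3),
    d31 (dvd_sub (dvd_sub (hb 2) (hb 1)) (hb 0)), d31 (dvd_sub (dvd_sub (hb 3) (hb 2)) (hb 0)),
    fun _ => ?_⟩
  rw [(h1 2 (by decide)).1, (h1 3 (by decide)).1, add_zero, add_zero]
  exact h3

/-- The permutation of the four axes induced by H. -/
def sH : Fin 4 → Fin 4 := ![1, 0, 3, 2]

/-- The permutation of the four axes induced by S. -/
def sS : Fin 4 → Fin 4 := ![0, 2, 3, 1]

lemma Mono_H {l : Fin 4} {M : Matrix (Fin 3) (Fin 3) ℂ} (h : Mono l M) :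
    Mono (sH l) (cj Hg M) := by
  obtain ⟨a, b, hr, h1, h2, h3⟩ := h
  obtain ⟨x, y, k1, r0, s0, r1, s1, r2, s2, u2, r3, s3⟩ := H_rep hr
  have z0 : 0 ≠ l → x 1 = 0 ∧ y 1 = 0 := fun h => by
    rw [r1, s1, (h1 0 h).1, (h1 0 h).2]; simp
  have z1 : 1 ≠ l → x 0 = 0 ∧ y 0 = 0 := fun h => by
    rw [r0, s0, (h1 1 h).1, (h1 1 h).2]; simp
  have z2 : 2 ≠ l → x 3 = 0 ∧ y 3 = 0 := fun h => by
    rw [r3, s3, (h1 2 h).1, (h1 2 h).2]; simp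
  have z3 : 3 ≠ l → x 2 = 0 ∧ y 2 = 0 := fun h => u2 (h1 3 h).1 (h1 3 h).2
  refine ⟨x, y, k1, ?_, ?_, ?_⟩
  · refine forall_four (fun h => z1 ?_) (fun h => z0 ?_) (fun h => z3 ?_) (fun h => z2 ?_) <;>
      (rintro rfl; exact h rfl)
  · fin_cases l
    · change _ ∣ y 1; rw [s1]; exact h2.neg_right
    · change _ ∣ y 0; rw [s0]; exact h2
    · change _ ∣ y 3; rw [s3]; exact h2.neg_right
    · change _ ∣ y 2; rw [d_congr s2]; exact h2
  · fin_cases l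
    · change ¬ _ ∣ x 1; rw [r1]; exact h3
    · change ¬ _ ∣ x 0; rw [r0]; exact h3
    · change ¬ _ ∣ x 3; rw [r3]; exact h3
    · change ¬ _ ∣ x 2; rw [d_congr r2]; exact h3

lemma Mono_S {l : Fin 4} {M : Matrix (Fin 3) (Fin 3) ℂ} (h : Mono l M) :
    Mono (sS l) (cj Sg M) := by
  obtain ⟨a, b, hr, h1, h2, h3⟩ := h
  refine ⟨_, _, S_rep hr, ?_, ?_, ?_⟩
  · refine forall_four (fun h => h1 0 ?_) (fun h => h1 3 ?_) (fun h => h1 1 ?_) (fun h => h1 2 ?_) <;>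
      (rintro rfl; exact h rfl)
  · fin_cases l <;> exact h2
  · fin_cases l <;> exact h3

/-- The starting matrices P + P². -/
def M0 (j : Fin 4) : Matrix (Fin 3) (Fin 3) ℂ := fP j + fP j ^ 2

lemma Mono_C (g : GL (Fin 3) ℂ) (hg : g ∈ Cliff) (h0 : ∀ j, Mono j (M0 j)) :
    (∀ j, ∃ l, Mono l (cj g (M0 j))) ∧ ∀ l, ∃ j, Mono l (cj g (M0 j)) := by
  refine closure_ind_finite C_gen_fin (p := fun g => (∀ j, ∃ l, Mono l (cj g (M0 j))) ∧
    ∀ l, ∃ j, Mono l (cj g (M0 j))) ?_ ?_ g hg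
  · simp only [cj_one]
    exact ⟨fun j => ⟨j, h0 j⟩, fun j => ⟨j, h0 j⟩⟩
  · rintro x hx y ⟨hy1, hy2⟩
    simp only [cj_mul]
    rcases hx with rfl | rfl
    · refine ⟨fun j => ?_, fun l => ?_⟩
      · obtain ⟨l, hl⟩ := hy1 j
        exact ⟨_, Mono_H hl⟩
      · have : ∃ l', sH l' = l := by revert l; decide
        obtain ⟨l', rfl⟩ := this
        obtain ⟨j, hj⟩ := hy2 l'
        exact ⟨j, Mono_H hj⟩
    · refine ⟨fun j => ?_, fun l => ?_⟩
      · obtain ⟨l, hl⟩ := hy1 j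
        exact ⟨_, Mono_S hl⟩
      · have : ∃ l', sS l' = l := by revert l; decide
        obtain ⟨l', rfl⟩ := this
        obtain ⟨j, hj⟩ := hy2 l'
        exact ⟨j, Mono_S hj⟩

lemma XZ_eq : Xmat * Zmat = !![0,0,ζ^6; 1,0,0; 0,ζ^3,0] := by
  rw [Xmat, Zmat_eq]
  ext i j; fin_cases i <;> fin_cases j <;> simp [Matrix.mul_apply, Fin.sum_univ_three]

lemma XZZ_eq : Xmat * Zmat ^ 2 = !![0,0,ζ^3; 1,0,0; 0,ζ^6,0] := by
  have h := zeta_nine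
  rw [pow_two, ← mul_assoc, XZ_eq, Zmat_eq]
  ext i j; fin_cases i <;> fin_cases j <;> simp [Matrix.mul_apply, Fin.sum_univ_three] <;> grind

lemma fP_sq (j : Fin 4) : fP j ^ 2 = (fP j)ᴴ := by
  have h := zeta_nine
  fin_cases j
  · change Zmat ^ 2 = Zmatᴴ
    rw [Zmat_eq, pow_two]
    ext i j; fin_cases i <;> fin_cases j <;>
      simp [Matrix.mul_apply, Fin.sum_univ_three, star_zeta] <;> grind
  · change Xmat ^ 2 = Xmatᴴ
    rw [XmatH, Xmat, pow_two]
    ext i j; fin_cases i <;> fin_cases j <;>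
      simp [Matrix.mul_apply, Fin.sum_univ_three]
  · change (Xmat * Zmat) ^ 2 = (Xmat * Zmat)ᴴ
    rw [XZ_eq, pow_two]
    ext i j; fin_cases i <;> fin_cases j <;>
      simp [Matrix.mul_apply, Fin.sum_univ_three, star_zeta] <;> grind
  · change (Xmat * Zmat ^ 2) ^ 2 = (Xmat * Zmat ^ 2)ᴴ
    rw [XZZ_eq, pow_two]
    ext i j; fin_cases i <;> fin_cases j <;>
      simp [Matrix.mul_apply, Fin.sum_univ_three, star_zeta] <;> grind

lemma M0_herm (j : Fin 4) : (M0 j).IsHermitian := by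
  rw [M0, fP_sq]
  exact Matrix.isHermitian_add_transpose_self _

lemma cf_M0 (k j : Fin 4) : cf k (M0 j) = if k = j then 3 else 0 := by
  have h := zeta_nine
  have h2 := zeta_rel
  have e0 : M0 0 = Zmat + Zmat * Zmat := by rw [M0, pow_two]; rfl
  have e1 : M0 1 = Xmat + Xmat * Xmat := by rw [M0, pow_two]; rfl
  have e2 : M0 2 = (Xmat * Zmat) + (Xmat * Zmat) * (Xmat * Zmat) := by rw [M0, pow_two]; rfl
  have e3 : M0 3 = (Xmat * Zmat ^ 2) + (Xmat * Zmat ^ 2) * (Xmat * Zmat ^ 2) := by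
    rw [M0, pow_two]; rfl
  rw [Zmat_eq] at e0
  rw [Xmat] at e1
  rw [XZ_eq] at e2
  rw [XZZ_eq] at e3
  fin_cases j
  · revert k
    refine forall_four ?_ ?_ ?_ ?_
    · rw [cf0]; simp [e0]; grind
    · rw [cf1]; simp [e0]
    · rw [cf2]; simp [e0]
    · rw [cf3]; simp [e0]
  · revert k
    refine forall_four ?_ ?_ ?_ ?_
    · rw [cf0]; simp [e1]
    · rw [cf1]; simp [e1]; norm_num
    · rw [cf2]; simp [e1]; grind
    · rw [cf3]; simp [e1]; grind
  · revert k
    refine forall_four ?_ ?_ ?_ ?_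
    · rw [cf0]; simp [e2]
    · rw [cf1]; simp [e2]; grind
    · rw [cf2]; simp [e2]; grind
    · rw [cf3]; simp [e2]; grind
  · revert k
    refine forall_four ?_ ?_ ?_ ?_
    · rw [cf0]; simp [e3]
    · rw [cf1]; simp [e3]; grind
    · rw [cf2]; simp [e3]; grind
    · rw [cf3]; simp [e3]; grind

lemma Mono_M0 (j : Fin 4) : Mono j (M0 j) := by
  refine ⟨fun k => if k = j then 1 else 0, fun _ => 0, ⟨M0_herm j, fun k => ?_⟩, ?_, ?_, ?_⟩
  · rw [cf_M0, rp]
    by_cases h : k = j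
    · simp [h]; ring
    · simp [h]
  · intro k hk; simp [hk]
  · exact dvd_zero _
  · simp only [if_true]; exact not_α_dvd_one

/-! ## Normal forms and denominators -/

lemma RedT_PM {m : ℕ} {u : GL (Fin 3) ℂ} (hu : RedT m u) :
    (∀ j, PM False m (cj u (M0 j))) ∧ ∃ j, PM True m (cj u (M0 j)) := by
  induction hu with
  | one c hc =>
    obtain ⟨h1, h2⟩ := Mono_C c hc Mono_M0
    simp only [cj_mul]
    refine ⟨fun j => ?_, ?_⟩
    · obtain ⟨l, hl⟩ := h1 j
      exact DM_T (Mono_D hl)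
    · obtain ⟨j, hj⟩ := h2 1
      exact ⟨j, DM_T (Mono_D1 hj)⟩
  | step m c u hc hu ih =>
    obtain ⟨h1, j, hj⟩ := ih
    simp only [cj_mul]
    exact ⟨fun j => DM_T (PM_BHB hc (h1 j)), j, DM_T (PM_BHB hc hj)⟩

lemma WM_weaken {n : ℕ} {M : Matrix (Fin 3) (Fin 3) ℂ} (h : WM True n M) : WM False n M := by
  obtain ⟨a, b, hr, -⟩ := h
  exact ⟨a, b, hr, fun h => h.elim⟩

lemma NF_WM {m : ℕ} {u : GL (Fin 3) ℂ} (hu : NF m u) :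
    (∀ j, WM False m (cj u (M0 j))) ∧ ∃ j, WM True m (cj u (M0 j)) := by
  cases hu with
  | zero c hc =>
    obtain ⟨h1, h2⟩ := Mono_C u hc Mono_M0
    refine ⟨fun j => ?_, ?_⟩
    · obtain ⟨l, hl⟩ := h1 j
      exact WM_weaken (Mono_W hl)
    · obtain ⟨j, hj⟩ := h2 1
      exact ⟨j, Mono_W hj⟩
  | pos m c u hc hu =>
    obtain ⟨h1, j, hj⟩ := RedT_PM hu
    simp only [cj_mul]
    exact ⟨fun j => WM_C c hc _ (PM_W (h1 j)), j, WM_C c hc _ (PM_W hj)⟩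

lemma Q_eq (i : Fin 4) : Q ⟨i.val, by omega⟩ = ((Real.sqrt 6 : ℂ))⁻¹ • M0 i := by
  fin_cases i <;> rfl

/-- Entries of the top-left quadrant in terms of coordinates. -/
lemma blockPP_eq (U : GL (Fin 3) ℂ) (i j : Fin 4) :
    blockPP (adj (U : Matrix (Fin 3) (Fin 3) ℂ)) i j = (cf i (cj U (M0 j))).re / 3 := by
  have hN : (cj U (M0 j)).IsHermitian := herm_conj _ (M0_herm j)
  have h6 : ((Real.sqrt 6 : ℂ))⁻¹ * ((Real.sqrt 6 : ℂ))⁻¹ = ((1 / 6 : ℝ) : ℂ) := by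
    rw [← mul_inv, ← Complex.ofReal_mul, Real.mul_self_sqrt (by norm_num)]
    push_cast; norm_num
  change (Matrix.trace (Q ⟨i.val, _⟩ * (U : Matrix (Fin 3) (Fin 3) ℂ) * Q ⟨j.val, _⟩ *
    (U : Matrix (Fin 3) (Fin 3) ℂ)ᴴ)).re = _
  rw [Q_eq, Q_eq]
  have e : ((Real.sqrt 6 : ℂ))⁻¹ • M0 i * (U : Matrix (Fin 3) (Fin 3) ℂ) *
      ((Real.sqrt 6 : ℂ))⁻¹ • M0 j * (U : Matrix (Fin 3) (Fin 3) ℂ)ᴴ =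
      ((1 / 6 : ℝ) : ℂ) • (M0 i * cj U (M0 j)) := by
    rw [← h6, cj]
    simp only [Matrix.smul_mul, Matrix.mul_smul, smul_smul, Matrix.mul_assoc]
  have e2 : Matrix.trace (M0 i * cj U (M0 j)) =
      cf i (cj U (M0 j)) + (starRingEnd ℂ) (cf i (cj U (M0 j))) := by
    rw [M0, fP_sq, Matrix.add_mul, Matrix.trace_add, cf]
    congr 1
    rw [starRingEnd_apply, ← Matrix.trace_conjTranspose, Matrix.conjTranspose_mul, hN.eq,
      Matrix.trace_mul_comm]
  rw [e, Matrix.trace_smul, e2, smul_eq_mul, Complex.re_ofReal_mul, Complex.add_re,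
    Complex.conj_re]
  ring

lemma rp_re {n : ℕ} {z : ℂ} {x y : Zα} (h : rp n z x y) : αR ^ (2 * n) * (z.re / 3) = (x : ℝ) := by
  have hα := alpha_pos.ne'
  have h1 : ((αR ^ (2 * n + 1) : ℝ) : ℂ) * z = ((3 * (αR * x) : ℝ) : ℂ) + ((3 * y : ℝ) : ℂ) * I := by
    have h' : (αR : ℂ) ^ (2 * n + 1) * z = 3 * ((αR : ℂ) * ((x : ℝ) : ℂ) + I * ((y : ℝ) : ℂ)) := h
    push_cast
    rw [h']; ring
  have h2 := congrArg Complex.re h1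
  rw [Complex.re_ofReal_mul] at h2
  simp only [Complex.add_re, Complex.ofReal_re, Complex.re_ofReal_mul, Complex.I_re, mul_zero,
    add_zero] at h2
  apply mul_left_cancel₀ hα
  rw [pow_succ] at h2
  linear_combination (1 / 3) * h2

/-- The least denominator exponent of a normal form. -/
lemma NF_LDE {m : ℕ} {U : GL (Fin 3) ℂ} (hU : NF m U) :
    IsLeast {k : ℕ | ∀ i j : Fin 4,
        αR ^ k * blockPP (adj (U : Matrix (Fin 3) (Fin 3) ℂ)) i j ∈ Zα} (2 * m) := by
  obtain ⟨h1, j, hj⟩ := NF_WM hU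
  constructor
  · intro i j
    obtain ⟨a, b, hr, -⟩ := h1 j
    rw [blockPP_eq, rp_re (hr.2 i)]
    exact (a i).2
  · intro k hk
    by_contra hlt
    obtain ⟨a, b, hr, h⟩ := hj
    obtain ⟨i, hi⟩ := h trivial
    apply hi
    have h2 := hk i j
    have h3 := rp_re (hr.2 i)
    rw [← blockPP_eq] at h3
    obtain ⟨d, hd⟩ : ∃ d, 2 * m = k + 1 + d := ⟨2 * m - (k + 1), by omega⟩
    refine ⟨αz ^ d * ⟨_, h2⟩, ?_⟩
    apply Subtype.ext
    push_cast
    rw [← h3, hd, coe_αz]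
    ring

/-- For every element U of the Clifford+T group, the minimum number
of occurrences of the letter T over all words in the alphabet {H, S, T} whose product
equals U is exactly half the least denominator exponent of Û₊₊ (in particular, this
least denominator exponent is even). -/
theorem min_T_count_is_half_LDE :
    ∀ U : GL (Fin 3) ℂ, U ∈ CliffT → ∃ n : ℕ,
      IsLeast {k : ℕ | ∃ w : List Letter, wordProd w = U ∧ w.count Letter.T = k} n ∧
      IsLeast {k : ℕ | ∀ i j : Fin 4,
        αR ^ k * blockPP (adj (U : Matrix (Fin 3) (Fin 3) ℂ)) i j ∈ Zα} (2 * n) := by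
  intro U hU
  obtain ⟨w, rfl⟩ := CT_word U hU
  obtain ⟨m, -, hm⟩ := word_NF w
  have hL := NF_LDE hm
  refine ⟨m, ⟨?_, ?_⟩, hL⟩
  · exact NF_word hm
  · rintro k ⟨v, hv, rfl⟩
    obtain ⟨m', hle, hm'⟩ := word_NF v
    rw [hv] at hm'
    have := hL.unique (NF_LDE hm')
    omega

end
end

section
/- For every P in the subgroup 𝒮 of GL(3,ℂ) generated by S and X there exists P′ ∈ 𝒮 with P·T = T·P′, and for every P′ ∈ 𝒮 there exists P ∈ 𝒮 with P·T = T·P′; that is, 𝒮·T = T·𝒮 as subsets of GL(3,ℂ). -/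
open Matrix Complex

noncomputable section

lemma zeta_cube : ζ ^ 3 = ω := by
  rw [ζ, ω, ← Complex.exp_nat_mul]
  congr 1
  push_cast
  ring

lemma S_mul_T : Sg * Tg = Tg * Sg := by
  apply Units.ext
  change Smat * Tmat = Tmat * Smat
  ext i j
  fin_cases i <;> fin_cases j <;>
    simp [Smat, Tmat, Matrix.mul_apply, Fin.sum_univ_three] <;> ring

lemma X_mul_T : Xg * Tg = Tg * (Sg * Xg) := by
  apply Units.ext
  change Xmat * Tmat = Tmat * (Smat * Xmat)
  have h9 := zeta_nine
  ext i j
  fin_cases i <;> fin_cases j <;>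
    simp [Smat, Tmat, Xmat, Matrix.mul_apply, Fin.sum_univ_three, ← zeta_cube]
  · linear_combination -h9
  · linear_combination (-ζ ^ 10 - ζ) * h9

lemma S_mem : Sg ∈ Sgrp := Subgroup.subset_closure (by simp)
lemma X_mem : Xg ∈ Sgrp := Subgroup.subset_closure (by simp)

/-- If conjugating the generators by `t` lands in the group, so does conjugating everything. -/
lemma conj_mem (t : GL (Fin 3) ℂ) (hS : t⁻¹ * Sg * t ∈ Sgrp) (hX : t⁻¹ * Xg * t ∈ Sgrp)
    (P : GL (Fin 3) ℂ) (hP : P ∈ Sgrp) : t⁻¹ * P * t ∈ Sgrp := by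
  have hle : Sgrp ≤ Sgrp.comap (MulAut.conj t⁻¹).toMonoidHom := by
    conv_lhs => rw [Sgrp]
    rw [Subgroup.closure_le]
    rintro x (rfl | rfl)
    · simpa using hS
    · simpa using hX
  simpa using hle hP

/-- For every P in the subgroup 𝒮 of GL(3,ℂ) generated by S and X
there exists P′ ∈ 𝒮 with P·T = T·P′, and for every P′ ∈ 𝒮 there exists P ∈ 𝒮 with
P·T = T·P′; that is, 𝒮·T = T·𝒮 as subsets of GL(3,ℂ). -/
theorem S_T_commutation :
    (∀ P ∈ Sgrp, ∃ P' ∈ Sgrp, P * Tg = Tg * P') ∧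
    (∀ P' ∈ Sgrp, ∃ P ∈ Sgrp, P * Tg = Tg * P') := by
  constructor
  · intro P hP
    refine ⟨Tg⁻¹ * P * Tg, conj_mem Tg ?_ ?_ P hP, by group⟩
    · rw [mul_assoc, S_mul_T, inv_mul_cancel_left]
      exact S_mem
    · rw [mul_assoc, X_mul_T, inv_mul_cancel_left]
      exact Sgrp.mul_mem S_mem X_mem
  · intro P hP
    have key := conj_mem Tg⁻¹ ?_ ?_ P hP
    · rw [inv_inv] at key
      exact ⟨_, key, by group⟩
    · rw [inv_inv, ← S_mul_T, mul_inv_cancel_right]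
      exact S_mem
    · have h : Tg * Xg = Sg⁻¹ * Xg * Tg := by
        rw [mul_assoc, X_mul_T, eq_inv_mul_iff_mul_eq, ← mul_assoc, S_mul_T, mul_assoc]
      rw [inv_inv, h, mul_inv_cancel_right]
      exact Sgrp.mul_mem (Sgrp.inv_mem S_mem) X_mem

end
end

section
/- For every 3×3 unitary matrix U, the 8×8 matrix Û with entries Û_{ij} = tr(Qᵢ U Qⱼ U†) has real entries and, regarded as a real matrix, is special orthogonal: Û·Ûᵀ = I₈ and det Û = 1. -/
open Matrix Complex

noncomputable section

lemma omega_quad : ω ^ 2 = -1 - ω := by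
  have h : (ω - 1) * (ω ^ 2 + ω + 1) = 0 := by linear_combination omega_cube
  rcases mul_eq_zero.mp h with h | h
  · exact absurd (by linear_combination h) omega_ne_one
  · linear_combination h

lemma star_omega : star ω = ω ^ 2 := by
  have h1 : star ω * ω = 1 := by
    have h : ω = Complex.exp ((2 * Real.pi / 3 : ℝ) * I) := by
      rw [ω]; push_cast; ring_nf
    have h2 : ‖ω‖ = 1 := by rw [h, Complex.norm_exp_ofReal_mul_I]
    have h3 := Complex.conj_mul' ω
    rw [h2] at h3
    simpa using h3
  linear_combination ω ^ 2 * h1 - star ω * omega_cube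

/-- The normalising constant. -/
def sc : ℂ := ((Real.sqrt 6 : ℂ))⁻¹

lemma sc_sq : 6 * sc ^ 2 = 1 := by
  have h : ((Real.sqrt 6 : ℝ) : ℂ) ^ 2 = 6 := by
    rw [← Complex.ofReal_pow, Real.sq_sqrt (by norm_num)]; norm_num
  rw [sc, inv_pow, h]; norm_num

lemma star_sc : star sc = sc := by simp [sc]

/-- Explicit forms of the matrices `Q i`. -/
def QE : Fin 8 → Matrix (Fin 3) (Fin 3) ℂ :=
  ![sc • !![2,0,0; 0,-1,0; 0,0,-1],
    sc • !![0,1,1; 1,0,1; 1,1,0],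
    sc • !![0,1,-1-ω; 1,0,-1-ω; ω,ω,0],
    sc • !![0,1,ω; 1,0,ω; -1-ω,-1-ω,0],
    (I * sc) • !![0,0,0; 0,1+2*ω,0; 0,0,-1-2*ω],
    (I * sc) • !![0,-1,1; 1,0,-1; -1,1,0],
    (I * sc) • !![0,-1,-1-ω; 1,0,1+ω; -ω,ω,0],
    (I * sc) • !![0,-1,ω; 1,0,-ω; 1+ω,-1-ω,0]]

lemma Pplus_sc (P : Matrix (Fin 3) (Fin 3) ℂ) : Pplus P = sc • (P + P * P) := by
  rw [Pplus, sc, pow_two]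

lemma Pminus_sc (P : Matrix (Fin 3) (Fin 3) ℂ) : Pminus P = (I * sc) • (P - P * P) := by
  rw [Pminus, sc, pow_two]

set_option maxHeartbeats 4000000 in
lemma Q_eq_s14 : Q = QE := by
  have h := omega_quad
  have h' := omega_cube
  funext i
  fin_cases i <;> ext a b <;> fin_cases a <;> fin_cases b <;>
    simp [Q, QE, Pplus_sc, Pminus_sc, Xmat, Zmat, pow_two] <;>
    grind

/-- The extended family: normalised identity followed by the `Q i`. -/
def Qx : Unit ⊕ Fin 8 → Matrix (Fin 3) (Fin 3) ℂ :=
  Sum.elim (fun _ => ((Real.sqrt 3 : ℂ))⁻¹ • 1) Q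

lemma Q_herm (i : Fin 8) : (Q i)ᴴ = Q i := by
  have h := omega_quad
  have h1 : (starRingEnd ℂ) ω = -1 - ω := by rw [← h]; exact star_omega
  have h2 : (starRingEnd ℂ) sc = sc := star_sc
  rw [Q_eq_s14]
  fin_cases i <;> ext a b <;> fin_cases a <;> fin_cases b <;>
    simp [QE, h1, h2] <;> grind

lemma Q_trace (i : Fin 8) : (Q i).trace = 0 := by
  rw [Q_eq_s14]
  fin_cases i <;> simp [QE, Matrix.trace_fin_three] <;> ring_nf <;> simp

lemma Q_orth (i j : Fin 8) : (Q i * Q j).trace = if i = j then 1 else 0 := by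
  have h := omega_quad
  have h2 := sc_sq
  have hI := Complex.I_sq
  rw [Q_eq_s14]
  fin_cases i <;> fin_cases j <;>
    simp [QE, Matrix.trace_fin_three, Matrix.mul_apply, Fin.sum_univ_three] <;> grind

lemma sqrt3_sq : ((Real.sqrt 3 : ℝ) : ℂ)⁻¹ * ((Real.sqrt 3 : ℝ) : ℂ)⁻¹ * 3 = 1 := by
  have h : ((Real.sqrt 3 : ℝ) : ℂ) ^ 2 = 3 := by
    rw [← Complex.ofReal_pow, Real.sq_sqrt (by norm_num)]; norm_num
  rw [← mul_inv, ← pow_two, h]; norm_num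

lemma Qx_orth (i j : Unit ⊕ Fin 8) :
    (Qx i * Qx j).trace = if i = j then 1 else 0 := by
  rcases i with i | i <;> rcases j with j | j
  · have := sqrt3_sq
    simp [Qx, Matrix.trace_fin_three]
    linear_combination this
  · simp [Qx, Q_trace]
  · simp [Qx, Q_trace]
  · simp [Qx, Q_orth]

/-- Rows: vectorised transposes of the basis. -/
def Wl : Matrix (Unit ⊕ Fin 8) (Fin 3 × Fin 3) ℂ := Matrix.of fun i p => Qx i p.2 p.1

/-- Columns: vectorised basis. -/
def Wr : Matrix (Fin 3 × Fin 3) (Unit ⊕ Fin 8) ℂ := Matrix.of fun p j => Qx j p.1 p.2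

lemma Wl_Wr : Wl * Wr = 1 := by
  ext i j
  rw [Matrix.one_apply, ← Qx_orth, Matrix.mul_apply, Fintype.sum_prod_type, Finset.sum_comm]
  simp [Wl, Wr, Matrix.trace, Matrix.mul_apply]

lemma Wr_Wl : Wr * Wl = 1 := by
  have e : (Unit ⊕ Fin 8) ≃ (Fin 3 × Fin 3) := Fintype.equivOfCardEq (by simp)
  exact (Matrix.mul_eq_one_comm_of_equiv e).mp Wl_Wr

/-- The extended adjoint matrix. -/
def Mx (U : Matrix (Fin 3) (Fin 3) ℂ) : Matrix (Unit ⊕ Fin 8) (Unit ⊕ Fin 8) ℂ :=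
  Matrix.of fun i j => (Qx i * U * Qx j * Uᴴ).trace

lemma Mx_eq (U : Matrix (Fin 3) (Fin 3) ℂ) :
    Mx U = Wl * (Matrix.kroneckerMap (· * ·) U (U.map star)) * Wr := by
  ext i j
  simp [Mx, Wl, Wr, Matrix.trace, Matrix.mul_apply, Fintype.sum_prod_type, Fin.sum_univ_three]
  ring

lemma Mx_mul {U : Matrix (Fin 3) (Fin 3) ℂ} (h : U * Uᴴ = 1) : Mx U * Mx Uᴴ = 1 := by
  have h' : U.map star * Uᴴ.map star = 1 := by
    have := congrArg (fun A => A.map (starRingEnd ℂ)) h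
    simp only [Matrix.map_mul] at this
    simpa using this
  have hk : Matrix.kroneckerMap (· * ·) U (U.map star) *
      Matrix.kroneckerMap (· * ·) Uᴴ (Uᴴ.map star) = 1 := by
    rw [← Matrix.mul_kronecker_mul, h, h', Matrix.one_kronecker_one]
  rw [Mx_eq, Mx_eq]
  calc _ = Wl * (Matrix.kroneckerMap (· * ·) U (U.map star) * (Wr * Wl) *
      Matrix.kroneckerMap (· * ·) Uᴴ (Uᴴ.map star)) * Wr := by
        simp only [Matrix.mul_assoc]
    _ = 1 := by rw [Wr_Wl, Matrix.mul_one, hk, Matrix.mul_one, Wl_Wr]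

lemma Mx_det {U : Matrix (Fin 3) (Fin 3) ℂ} (h : U * Uᴴ = 1) : (Mx U).det = 1 := by
  have h1 : (U.map star).det = star U.det := by
    rw [← Matrix.det_conjTranspose, ← Matrix.det_transpose]; rfl
  have h2 : U.det * star U.det = 1 := by
    rw [← Matrix.det_conjTranspose, ← Matrix.det_mul, h, Matrix.det_one]
  rw [Mx_eq, Matrix.det_conj_of_mul_eq_one Wl_Wr Wr_Wl, Matrix.det_kronecker, h1,
    Fintype.card_fin, ← mul_pow, h2, one_pow]

lemma entry_im (U : Matrix (Fin 3) (Fin 3) ℂ) (i j : Fin 8) :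
    (Matrix.trace (Q i * U * Q j * Uᴴ)).im = 0 := by
  rw [← Complex.conj_eq_iff_im]
  change star _ = _
  rw [← Matrix.trace_conjTranspose]
  simp only [Matrix.conjTranspose_mul, Q_herm, Matrix.conjTranspose_conjTranspose]
  rw [← Matrix.mul_assoc, ← Matrix.mul_assoc, Matrix.trace_mul_comm]
  simp only [Matrix.mul_assoc]

lemma Mx_blocks {U : Matrix (Fin 3) (Fin 3) ℂ} (h : U * Uᴴ = 1) (h' : Uᴴ * U = 1) :
    Mx U = Matrix.fromBlocks 1 0 0 ((adj U).map Complex.ofRealHom) := by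
  ext i j
  rcases i with i | i <;> rcases j with j | j
  · have := sqrt3_sq
    simp [Mx, Qx, h]
    linear_combination this
  · simp only [Mx, Qx, Matrix.of_apply, Sum.elim_inl, Sum.elim_inr, Matrix.fromBlocks_apply₁₂]
    simp only [Matrix.smul_mul, Matrix.one_mul, Matrix.trace_smul]
    rw [Matrix.trace_mul_comm, ← Matrix.mul_assoc, h', Matrix.one_mul, Q_trace]
    simp
  · simp [Mx, Qx, Matrix.mul_assoc, h, Q_trace]
  · simp only [Mx, Qx, Matrix.of_apply, Sum.elim_inr, Matrix.fromBlocks_apply₂₂, adj,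
      Matrix.map_apply]
    exact Complex.ext rfl (entry_im U i j)

lemma adj_conjTranspose (U : Matrix (Fin 3) (Fin 3) ℂ) : adj Uᴴ = (adj U)ᵀ := by
  ext i j
  simp only [adj, Matrix.of_apply, Matrix.transpose_apply, Matrix.conjTranspose_conjTranspose]
  rw [Matrix.mul_assoc, Matrix.trace_mul_comm, ← Matrix.mul_assoc]

/-- For every 3×3 unitary matrix U, the 8×8 matrix Û with entries
Û_{ij} = tr(Qᵢ U Qⱼ U†) has real entries and, regarded as a real matrix, is special
orthogonal: Û·Ûᵀ = I₈ and det Û = 1. -/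
theorem adjoint_is_special_orthogonal
    (U : Matrix (Fin 3) (Fin 3) ℂ) (hU : U ∈ Matrix.unitaryGroup (Fin 3) ℂ) :
    (∀ i j : Fin 8, (Matrix.trace (Q i * U * Q j * Uᴴ)).im = 0) ∧
    adj U * (adj U)ᵀ = 1 ∧ (adj U).det = 1 := by
  have h' : Uᴴ * U = 1 := Matrix.mem_unitaryGroup_iff'.mp hU
  have h : U * Uᴴ = 1 := Matrix.mem_unitaryGroup_iff.mp hU
  refine ⟨entry_im U, ?_, ?_⟩
  · have hm := Mx_mul h
    rw [Mx_blocks h h', Mx_blocks (U := Uᴴ) (by simpa using h') (by simpa using h),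
      Matrix.fromBlocks_multiply, ← Matrix.fromBlocks_one, Matrix.fromBlocks_inj] at hm
    have hb := hm.2.2.2
    rw [Matrix.zero_mul, zero_add, ← Matrix.map_mul, adj_conjTranspose] at hb
    apply Matrix.map_injective (f := Complex.ofRealHom) Complex.ofReal_injective
    simpa using hb
  · have hd := Mx_det h
    rw [Mx_blocks h h', Matrix.det_fromBlocks_zero₂₁, Matrix.det_one, one_mul] at hd
    have h3 := RingHom.map_det Complex.ofRealHom (adj U)
    rw [RingHom.mapMatrix_apply, hd] at h3
    exact Complex.ofReal_injective (by simpa using h3)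

end
end
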